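/- Let (X, d, T) be a topological dynamical system. Then for every δ ∈ (0,1), the upper metric mean dimension satisfies mdim̄_M(X,d,T) = limsup_{ε→0} (1/log(1/ε)) · sup_{μ ∈ E_T(X)} inf{ h_μ^S(U, δ) : U a finite open cover of X with diam(U) ≤ ε }. -/

import Mathlib

open Filter MeasureTheory Set Topology

variable {X : Type*}

/-- The dynamical (Bowen) metric `d_n(x,y) = max_{0 ≤ k ≤ n-1} d(T^k x, T^k y)`. -/
noncomputable def dynDist [MetricSpace X] (T : X → X) (n : ℕ) (x y : X) : ℝ :=
  ⨆ k ∈ Finset.range n, dist (T^[k] x) (T^[k] y)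

/-- The open dynamical ball `B_n(x, ε) = {y : d_n(x,y) < ε}`. -/
def dynBall [MetricSpace X] (T : X → X) (n : ℕ) (x : X) (ε : ℝ) : Set X :=
  {y | dynDist T n x y < ε}

/-- `s_n(K, ε)`: the maximal cardinality of an `(n,ε)`-separated subset of `K`. -/
noncomputable def sepNum [MetricSpace X] (T : X → X) (n : ℕ) (K : Set X) (ε : ℝ) : ℕ :=
  sSup {m | ∃ E : Finset X, ↑E ⊆ K ∧
    (∀ x ∈ E, ∀ y ∈ E, x ≠ y → ε < dynDist T n x y) ∧ E.card = m}

/-- `S(K, ε) = limsup_n (1/n) log s_n(K, ε)`. -/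
noncomputable def sepEnt [MetricSpace X] (T : X → X) (K : Set X) (ε : ℝ) : EReal :=
  limsup (fun n : ℕ => ((Real.log (sepNum T n K ε) / n : ℝ) : EReal)) atTop

/-- `r_n(K, ε)`: the minimal cardinality of an `(n,ε)`-spanning set for `K`. -/
noncomputable def spanNum [MetricSpace X] (T : X → X) (n : ℕ) (K : Set X) (ε : ℝ) : ℕ :=
  sInf {m | ∃ F : Finset X, (∀ x ∈ K, ∃ y ∈ F, dynDist T n x y ≤ ε) ∧ F.card = m}

/-- `R(K, ε) = limsup_n (1/n) log r_n(K, ε)`. -/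
noncomputable def spanEnt [MetricSpace X] (T : X → X) (K : Set X) (ε : ℝ) : EReal :=
  limsup (fun n : ℕ => ((Real.log (spanNum T n K ε) / n : ℝ) : EReal)) atTop

/-- Upper metric mean dimension. -/
noncomputable def mdimUpper [MetricSpace X] (T : X → X) : EReal :=
  limsup (fun ε : ℝ => sepEnt T univ ε / ((Real.log (1 / ε) : ℝ) : EReal)) (𝓝[>] (0:ℝ))

/-- Lower metric mean dimension. -/
noncomputable def mdimLower [MetricSpace X] (T : X → X) : EReal :=
  liminf (fun ε : ℝ => sepEnt T univ ε / ((Real.log (1 / ε) : ℝ) : EReal)) (𝓝[>] (0:ℝ))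

/-- The ergodic `T`-invariant Borel probability measures. -/
def ergodicMeasures [MeasurableSpace X] (T : X → X) : Set (Measure X) :=
  {μ | IsProbabilityMeasure μ ∧ Ergodic T μ}

/-- `U` is a finite open cover of `X`. -/
def IsFiniteOpenCover [TopologicalSpace X] (U : Finset (Set X)) : Prop :=
  (∀ V ∈ U, IsOpen V) ∧ ⋃₀ (U : Set (Set X)) = univ

/-- The cover `U^n = ⋁_{i=0}^{n-1} T^{-i} U`. -/
def dynRefine (T : X → X) (U : Finset (Set X)) (n : ℕ) : Set (Set X) :=
  {V | ∃ f : Fin n → Set X, (∀ i, f i ∈ U) ∧ V = ⋂ i : Fin n, T^[(i : ℕ)] ⁻¹' f i}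

/-- `N(C)`: the minimal cardinality of a subcover of `C`. -/
noncomputable def coverNum (C : Set (Set X)) : ℕ :=
  sInf {m | ∃ F : Finset (Set X), ↑F ⊆ C ∧ ⋃₀ (F : Set (Set X)) = univ ∧ F.card = m}

/-- `N_μ(U^n, δ)`: minimal number of members of `U^n` needed to cover a set of measure ≥ δ. -/
noncomputable def shapiraNum [MeasurableSpace X] (T : X → X) (μ : Measure X)
    (U : Finset (Set X)) (n : ℕ) (δ : ℝ) : ℕ :=
  sInf {m | ∃ F : Finset (Set X), ↑F ⊆ dynRefine T U n ∧
    ENNReal.ofReal δ ≤ μ (⋃₀ (F : Set (Set X))) ∧ F.card = m}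

/-- Shapira's entropy `h_μ^S(U, δ) = limsup_n (1/n) log N_μ(U^n, δ)`. -/
noncomputable def shapiraEnt [MeasurableSpace X] (T : X → X) (μ : Measure X)
    (U : Finset (Set X)) (δ : ℝ) : EReal :=
  limsup (fun n : ℕ => ((Real.log (shapiraNum T μ U n δ) / n : ℝ) : EReal)) atTop

/-- `N_μ^δ(n, ε)`: smallest number of open `(n,ε)`-dynamical balls whose union has
measure `> δ`. -/
noncomputable def katokNum [MetricSpace X] [MeasurableSpace X] (T : X → X) (μ : Measure X)
    (n : ℕ) (ε δ : ℝ) : ℕ :=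
  sInf {m | ∃ F : Finset X, ENNReal.ofReal δ < μ (⋃ x ∈ F, dynBall T n x ε) ∧ F.card = m}

/-- Katok's entropy `h_μ^K(ε, δ) = limsup_n (1/n) log N_μ^δ(n, ε)`. -/
noncomputable def katokEnt [MetricSpace X] [MeasurableSpace X] (T : X → X) (μ : Measure X)
    (ε δ : ℝ) : EReal :=
  limsup (fun n : ℕ => ((Real.log (katokNum T μ n ε δ) / n : ℝ) : EReal)) atTop

/-- Lower Katok entropy `h̲_μ^K(ε, δ) = liminf_n (1/n) log N_μ^δ(n, ε)`. -/
noncomputable def katokEntLower [MetricSpace X] [MeasurableSpace X] (T : X → X) (μ : Measure X)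
    (ε δ : ℝ) : EReal :=
  liminf (fun n : ℕ => ((Real.log (katokNum T μ n ε δ) / n : ℝ) : EReal)) atTop

/-- `Ñ_μ^δ(n, ε)`: smallest number of sets of `d_n`-diameter ≤ ε whose union has
measure `> δ`. -/
noncomputable def katokNumTilde [MetricSpace X] [MeasurableSpace X] (T : X → X) (μ : Measure X)
    (n : ℕ) (ε δ : ℝ) : ℕ :=
  sInf {m | ∃ F : Finset (Set X), (∀ A ∈ F, ∀ x ∈ A, ∀ y ∈ A, dynDist T n x y ≤ ε) ∧
    ENNReal.ofReal δ < μ (⋃₀ (F : Set (Set X))) ∧ F.card = m}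

/-- Brin–Katok local entropy `h_μ^{BK}(x, ε) = limsup_n -(1/n) log μ(B_n(x, ε))`. -/
noncomputable def brinKatok [MetricSpace X] [MeasurableSpace X] (T : X → X) (μ : Measure X)
    (x : X) (ε : ℝ) : EReal :=
  limsup (fun n : ℕ => -(ENNReal.log (μ (dynBall T n x ε))) / (n : EReal)) atTop

/-- Lower Brin–Katok local entropy `h̲_μ^{BK}(x, ε) = liminf_n -(1/n) log μ(B_n(x, ε))`. -/
noncomputable def brinKatokLower [MetricSpace X] [MeasurableSpace X] (T : X → X) (μ : Measure X)
    (x : X) (ε : ℝ) : EReal :=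
  liminf (fun n : ℕ => -(ENNReal.log (μ (dynBall T n x ε))) / (n : EReal)) atTop

/-- Local entropy function `h_d(x, ε) = inf { S(K, ε) : K closed neighborhood of x }`. -/
noncomputable def locEnt [MetricSpace X] (T : X → X) (x : X) (ε : ℝ) : EReal :=
  ⨅ K ∈ {K : Set X | IsClosed K ∧ K ∈ 𝓝 x}, sepEnt T K ε

/-- Local spanning entropy `h̃_d(x, ε) = inf { R(K, ε) : K closed neighborhood of x }`. -/
noncomputable def locSpanEnt [MetricSpace X] (T : X → X) (x : X) (ε : ℝ) : EReal :=
  ⨅ K ∈ {K : Set X | IsClosed K ∧ K ∈ 𝓝 x}, spanEnt T K ε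

/-- `U_x^n`: the union of all cells of `U^n` containing `x`. -/
def dynCoverCell (T : X → X) (U : Finset (Set X)) (n : ℕ) (x : X) : Set X :=
  ⋃₀ {V | V ∈ dynRefine T U n ∧ x ∈ V}

/-!
Fix a scale `ε`. For an invariant probability measure `μ` let `F(μ)` be the infimum of
`H_μ(P) / m` over `m ≥ 1` and finite continuous partitions of unity `P` whose members have supports
of `d_m`-diameter at most `ε`, where `H_μ(P)` is the Shannon entropy of the weights `∫ P_k dμ`.
Working with continuous functions instead of measurable sets makes `F` an infimum of continuous
functions, hence upper semicontinuous for weak convergence. Two things follow. Averaging uniform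
measures on maximal `(n, ε)`-separated sets along orbits (Misiurewicz's argument) gives, for each
`c < S(X, ε)`, an invariant measure with `F ≥ c`. And `F` attains its maximum on a compact set of
invariant measures; as `F` is convex along splittings into invariant sets, that set contains an
ergodic measure. For ergodic `μ` and a cover `U` of mesh at most `ε`, cutting typical long orbits
into pieces that start in a set covered by few elements of `U^n` gives `F(μ) ≤ h_μ^S(U, δ)`.
Hence `S(X, ε) ≤ sup_μ inf_U h_μ^S(U, δ)`. Conversely a cover of mesh `ε` with Lebesgue number
`ε / 4` shows that the right-hand side is at most `S(X, ε / 4)`, and the factor `4` disappears after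
division by `log (1 / ε)`.
-/

section ShannonEntropy

variable {α β : Type*}

lemma sum_negMulLog_le (s : Finset α) {p : α → ℝ} (hp : ∀ i ∈ s, 0 ≤ p i) :
    ∑ i ∈ s, Real.negMulLog (p i) ≤
      Real.negMulLog (∑ i ∈ s, p i) + (∑ i ∈ s, p i) * Real.log s.card := by
  rcases s.eq_empty_or_nonempty with rfl | hs
  · simp
  have hcard : (0 : ℝ) < s.card := by exact_mod_cast hs.card_pos
  have jensen := Real.concaveOn_negMulLog.le_map_sum (t := s) (w := fun _ => (s.card : ℝ)⁻¹)
    (p := p) (fun _ _ => by positivity) (by simp [hcard.ne']) hp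
  simp only [smul_eq_mul, ← Finset.mul_sum] at jensen
  rw [Real.negMulLog_mul, Real.negMulLog, Real.log_inv] at jensen
  have := mul_le_mul_of_nonneg_left jensen hcard.le
  field_simp at this
  linarith

lemma sum_negMulLog_sum_type_le [Fintype α] [Fintype β] {p : α ⊕ β → ℝ} (hp : ∀ k, 0 ≤ p k)
    (hsum : ∑ k, p k = 1) :
    ∑ k, Real.negMulLog (p k) ≤ Real.log 2 + (∑ i, p (.inl i)) * Real.log (Fintype.card α) +
      (∑ j, p (.inr j)) * Real.log (Fintype.card β) := by
  rw [Fintype.sum_sum_type] at hsum ⊢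
  have left := sum_negMulLog_le Finset.univ fun i _ => hp (.inl i)
  have right := sum_negMulLog_le Finset.univ fun j _ => hp (.inr j)
  have choice := Real.binEntropy_le_log_two (p := ∑ i, p (.inl i))
  rw [Real.binEntropy_eq_negMulLog_add_negMulLog_one_sub, ← hsum, add_sub_cancel_left] at choice
  rw [Finset.card_univ] at left right
  linarith

lemma sum_sum_negMulLog_le [Fintype α] [Fintype β] {p : α → β → ℝ} (hp : ∀ i j, 0 ≤ p i j)
    (hsum : ∑ i, ∑ j, p i j = 1) :
    ∑ i, ∑ j, Real.negMulLog (p i j) ≤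
      ∑ i, Real.negMulLog (∑ j, p i j) + ∑ j, Real.negMulLog (∑ i, p i j) := by
  set a : α → ℝ := fun i => ∑ j, p i j
  have le_a (i j) : p i j ≤ a i := Finset.single_le_sum (fun j _ => hp i j) (Finset.mem_univ j)
  have eq_zero {i} (hi : a i = 0) (j) : p i j = 0 := le_antisymm (hi ▸ le_a i j) (hp i j)
  have mul_div_a (i j) : a i * (p i j / a i) = p i j :=
    mul_div_cancel_of_imp' fun hi => eq_zero hi j
  have jensen (j) : ∑ i, a i * Real.negMulLog (p i j / a i) ≤ Real.negMulLog (∑ i, p i j) := by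
    simpa only [smul_eq_mul, mul_div_a] using Real.concaveOn_negMulLog.le_map_sum
      (t := Finset.univ) (w := a) (p := fun i => p i j / a i)
      (fun i _ => Finset.sum_nonneg fun j _ => hp i j) hsum
      (fun i _ => div_nonneg (hp i j) ((hp i j).trans (le_a i j)))
  have split_row (i) : ∑ j, Real.negMulLog (p i j) =
      Real.negMulLog (a i) + ∑ j, a i * Real.negMulLog (p i j / a i) := by
    have split_entry (j) : Real.negMulLog (p i j) =
        p i j / a i * Real.negMulLog (a i) + a i * Real.negMulLog (p i j / a i) := by
      rw [← Real.negMulLog_mul, mul_div_a]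
    simp_rw [split_entry, Finset.sum_add_distrib, ← Finset.sum_mul, ← Finset.sum_div]
    rcases eq_or_ne (a i) 0 with hi | hi
    · simp [hi]
    · rw [show ∑ j, p i j = a i from rfl, div_self hi, one_mul]
  calc ∑ i, ∑ j, Real.negMulLog (p i j)
      = ∑ i, Real.negMulLog (a i) + ∑ j, ∑ i, a i * Real.negMulLog (p i j / a i) := by
        rw [Finset.sum_comm (γ := β), ← Finset.sum_add_distrib]
        exact Finset.sum_congr rfl fun i _ => split_row i
    _ ≤ _ := by gcongr with j; exact jensen j

end ShannonEntropy

/-- A finite continuous partition of unity, the continuous substitute for a finite measurable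
partition: its weights `∫ P k ∂μ` depend continuously on the measure `μ`. -/
structure FinitePartitionOfUnity.{u} (X : Type u) [TopologicalSpace X] where
  Index : Type u
  [fintype : Fintype Index]
  toFun : Index → C(X, ℝ)
  nonneg : ∀ k x, 0 ≤ toFun k x
  sum_eq_one : ∑ k, toFun k = 1

namespace FinitePartitionOfUnity

attribute [instance] fintype

section Basic

variable [TopologicalSpace X]

instance : CoeFun (FinitePartitionOfUnity X) fun P => P.Index → C(X, ℝ) := ⟨toFun⟩

lemma sum_apply (P : FinitePartitionOfUnity X) (x : X) : ∑ k, P k x = 1 := by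
  simpa using DFunLike.congr_fun P.sum_eq_one x

lemma apply_le_one (P : FinitePartitionOfUnity X) (k : P.Index) (x : X) : P k x ≤ 1 :=
  P.sum_apply x ▸ Finset.single_le_sum (f := fun k => P k x) (fun _ _ => P.nonneg _ x)
    (Finset.mem_univ k)

instance : One (FinitePartitionOfUnity X) where
  one :=
    { Index := PUnit
      toFun := 1
      nonneg := by simp
      sum_eq_one := by simp }

instance : Mul (FinitePartitionOfUnity X) where
  mul P Q :=
    { Index := P.Index × Q.Index
      toFun := fun k => P k.1 * Q k.2
      nonneg := fun k x => mul_nonneg (P.nonneg k.1 x) (Q.nonneg k.2 x)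
      sum_eq_one := by
        simp_rw [Fintype.sum_prod_type, ← Finset.mul_sum, Q.sum_eq_one, mul_one, P.sum_eq_one] }

/-- The pullback of a partition of unity under a continuous map. -/
def comp (P : FinitePartitionOfUnity X) (S : C(X, X)) : FinitePartitionOfUnity X where
  Index := P.Index
  toFun k := (P k).comp S
  nonneg k x := P.nonneg k (S x)
  sum_eq_one := by
    ext x
    simpa using P.sum_apply (S x)

/-- The partition of unity consisting of the members of `P` weighted by `ρ` and those of `Q`
weighted by `1 - ρ`. -/
def mix (ρ : C(X, ℝ)) (hρ : ∀ x, ρ x ∈ Icc (0 : ℝ) 1) (P Q : FinitePartitionOfUnity X) :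
    FinitePartitionOfUnity X where
  Index := P.Index ⊕ Q.Index
  toFun := Sum.elim (fun k => ρ * P k) (fun k => (1 - ρ) * Q k)
  nonneg := by
    rintro (k | k) x
    · exact mul_nonneg (hρ x).1 (P.nonneg k x)
    · exact mul_nonneg (sub_nonneg.2 (hρ x).2) (Q.nonneg k x)
  sum_eq_one := by
    simp [← Finset.mul_sum, P.sum_eq_one, Q.sum_eq_one]

end Basic

section Entropy

variable [TopologicalSpace X] [MeasurableSpace X]

/-- The Shannon entropy of the weights `∫ P k ∂μ` of a partition of unity. -/
noncomputable def entropy (μ : Measure X) (P : FinitePartitionOfUnity X) : ℝ :=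
  ∑ k, Real.negMulLog (∫ x, P k x ∂μ)

lemma integral_nonneg (μ : Measure X) (P : FinitePartitionOfUnity X) (k : P.Index) :
    0 ≤ ∫ x, P k x ∂μ :=
  MeasureTheory.integral_nonneg (P.nonneg k)

lemma entropy_one (μ : Measure X) [IsProbabilityMeasure μ] :
    entropy μ (1 : FinitePartitionOfUnity X) = 0 := by
  change ∑ _ : PUnit, Real.negMulLog (∫ _, (1 : ℝ) ∂μ) = 0
  simp

variable [OpensMeasurableSpace X] (μ : Measure X)

lemma integrable [IsFiniteMeasure μ] (P : FinitePartitionOfUnity X) (k : P.Index) :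
    Integrable (P k) μ :=
  .of_bound (P k).continuous.measurable.aestronglyMeasurable 1 <| .of_forall fun x => by
    rw [Real.norm_of_nonneg (P.nonneg k x)]
    exact P.apply_le_one k x

variable [IsProbabilityMeasure μ]

lemma sum_integral (P : FinitePartitionOfUnity X) : ∑ k, ∫ x, P k x ∂μ = 1 := by
  rw [← integral_finsetSum _ fun k _ => P.integrable μ k]
  simp [P.sum_apply]

lemma integral_le_one (P : FinitePartitionOfUnity X) (k : P.Index) : ∫ x, P k x ∂μ ≤ 1 :=
  P.sum_integral μ ▸ Finset.single_le_sum (f := fun k => ∫ x, P k x ∂μ)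
    (fun k _ => P.integral_nonneg μ k) (Finset.mem_univ k)

lemma entropy_nonneg (P : FinitePartitionOfUnity X) : 0 ≤ P.entropy μ :=
  Finset.sum_nonneg fun k _ => Real.negMulLog_nonneg (P.integral_nonneg μ k)
    (P.integral_le_one μ k)

lemma entropy_le_log_card (P : FinitePartitionOfUnity X) :
    P.entropy μ ≤ Real.log (Fintype.card P.Index) := by
  simpa [entropy, P.sum_integral μ] using
    sum_negMulLog_le Finset.univ fun k _ => P.integral_nonneg μ k

lemma entropy_mul_le (P Q : FinitePartitionOfUnity X) :
    (P * Q).entropy μ ≤ P.entropy μ + Q.entropy μ := by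
  have integrable_mul (i j) : Integrable (fun x => P i x * Q j x) μ :=
    (P * Q).integrable μ (i, j)
  have sum_right (i) : ∑ j, ∫ x, P i x * Q j x ∂μ = ∫ x, P i x ∂μ := by
    rw [← integral_finsetSum _ fun j _ => integrable_mul i j]
    simp_rw [← Finset.mul_sum, Q.sum_apply, mul_one]
  have sum_left (j) : ∑ i, ∫ x, P i x * Q j x ∂μ = ∫ x, Q j x ∂μ := by
    rw [← integral_finsetSum _ fun i _ => integrable_mul i j]
    simp_rw [← Finset.sum_mul, P.sum_apply, one_mul]
  have subadd := sum_sum_negMulLog_le (p := fun i j => ∫ x, P i x * Q j x ∂μ)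
    (fun i j => (P * Q).integral_nonneg μ (i, j)) (by simp_rw [sum_right, P.sum_integral μ])
  simp_rw [sum_left, sum_right, ← Fintype.sum_prod_type'] at subadd
  exact subadd

omit [IsProbabilityMeasure μ] in
lemma entropy_comp [BorelSpace X] (P : FinitePartitionOfUnity X) (S : C(X, X)) :
    (P.comp S).entropy μ = P.entropy (μ.map S) := by
  refine Finset.sum_congr rfl fun k _ => congrArg _ ?_
  exact (integral_map S.continuous.measurable.aemeasurable
    (P k).continuous.measurable.aestronglyMeasurable).symm

lemma neg_log_le_entropy (P : FinitePartitionOfUnity X) {c : ℝ}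
    (hP : ∀ k, μ.real (Function.support (P k)) ≤ c) : -Real.log c ≤ P.entropy μ := by
  have weight_le (k) : ∫ x, P k x ∂μ ≤ c := by
    have hsupp : MeasurableSet (Function.support (P k)) :=
      (P k).continuous.isOpen_support.measurableSet
    calc ∫ x, P k x ∂μ
        ≤ ∫ x, (Function.support (P k)).indicator (fun _ => (1 : ℝ)) x ∂μ := by
          refine integral_mono (P.integrable μ k)
            ((integrable_const 1).indicator hsupp) fun x => ?_
          by_cases hx : x ∈ Function.support (P k)
          · simpa [indicator_of_mem hx] using P.apply_le_one k x
          · simp_all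
      _ = μ.real (Function.support (P k)) := by simp [integral_indicator hsupp]
      _ ≤ c := hP k
  have term_le (k) : (∫ x, P k x ∂μ) * -Real.log c ≤ Real.negMulLog (∫ x, P k x ∂μ) := by
    rcases (P.integral_nonneg μ k).eq_or_lt with h0 | hpos
    · simp [← h0]
    · rw [Real.negMulLog, neg_mul_comm]
      gcongr
      exact weight_le k
  calc -Real.log c = ∑ k, (∫ x, P k x ∂μ) * -Real.log c := by
        rw [← Finset.sum_mul, P.sum_integral μ, one_mul]
    _ ≤ P.entropy μ := Finset.sum_le_sum fun k _ => term_le k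

end Entropy

end FinitePartitionOfUnity

section DynSmall

/-- `V` has diameter at most `ε` at all times in `S`; for `S = Iio n` this says that the
`d_n`-diameter of `V` is at most `ε`. -/
def DynSmall [PseudoMetricSpace X] (T : X → X) (ε : ℝ) (S : Set ℕ) (V : Set X) : Prop :=
  ∀ x ∈ V, ∀ y ∈ V, ∀ i ∈ S, dist (T^[i] x) (T^[i] y) ≤ ε

variable [PseudoMetricSpace X] {T : X → X} {ε : ℝ} {S S' : Set ℕ} {V V' : Set X}

lemma DynSmall.mono (hV : DynSmall T ε S V) (hS : S' ⊆ S) (hV' : V' ⊆ V) :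
    DynSmall T ε S' V' :=
  fun x hx y hy i hi => hV x (hV' hx) y (hV' hy) i (hS hi)

lemma DynSmall.inter (hV : DynSmall T ε S V) (hV' : DynSmall T ε S' V') :
    DynSmall T ε (S ∪ S') (V ∩ V') := by
  rintro x hx y hy i (hi | hi)
  · exact hV x hx.1 y hy.1 i hi
  · exact hV' x hx.2 y hy.2 i hi

lemma DynSmall.preimage_iterate {m : ℕ} (hV : DynSmall T ε (Iio m) V) (t : ℕ) :
    DynSmall T ε (Ico t (t + m)) (T^[t] ⁻¹' V) := by
  rintro x hx y hy i ⟨hti, him⟩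
  have := hV _ hx _ hy (i - t) (by simp only [mem_Iio]; lia)
  rwa [← Function.iterate_add_apply, ← Function.iterate_add_apply, Nat.sub_add_cancel hti] at this

end DynSmall

namespace FinitePartitionOfUnity

section IsDynSmall

variable [PseudoMetricSpace X]

/-- Every member of `P` is supported on a set that is small at all times in `S`. -/
def IsDynSmall (T : X → X) (ε : ℝ) (S : Set ℕ) (P : FinitePartitionOfUnity X) : Prop :=
  ∀ k, DynSmall T ε S (Function.support (P k))

variable {T : X → X} {ε : ℝ} {S S' : Set ℕ} {P Q : FinitePartitionOfUnity X}

lemma IsDynSmall.mono (hP : P.IsDynSmall T ε S) (hS : S' ⊆ S) : P.IsDynSmall T ε S' :=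
  fun k => (hP k).mono hS subset_rfl

lemma IsDynSmall.mul (hP : P.IsDynSmall T ε S) (hQ : Q.IsDynSmall T ε S') :
    (P * Q).IsDynSmall T ε (S ∪ S') := fun k =>
  ((hP k.1).inter (hQ k.2)).mono subset_rfl
    (Function.support_mul (P k.1) (Q k.2)).subset

lemma IsDynSmall.mix (ρ : C(X, ℝ)) (hρ : ∀ x, ρ x ∈ Icc (0 : ℝ) 1) (hP : P.IsDynSmall T ε S)
    (hQ : Q.IsDynSmall T ε S) : (mix ρ hρ P Q).IsDynSmall T ε S := by
  rintro (k | k)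
  · exact (hP k).mono subset_rfl (Function.support_mul_subset_right ρ (P k))
  · exact (hQ k).mono subset_rfl (Function.support_mul_subset_right ⇑(1 - ρ) (Q k))

lemma IsDynSmall.comp_iterate (hT : Continuous T) {m : ℕ} (hP : P.IsDynSmall T ε (Iio m))
    (t : ℕ) : (P.comp ⟨T^[t], hT.iterate t⟩).IsDynSmall T ε (Ico t (t + m)) :=
  fun k => (hP k).preimage_iterate t

lemma exists_isDynSmall_biUnion_Ico [MeasurableSpace X] [BorelSpace X] (hT : Continuous T)
    {m : ℕ} (hP : P.IsDynSmall T ε (Iio m)) {ι : Type*} (s : Finset ι) (t : ι → ℕ) :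
    ∃ Q : FinitePartitionOfUnity X, Q.IsDynSmall T ε (⋃ i ∈ s, Ico (t i) (t i + m)) ∧
      ∀ (ν : Measure X) [IsProbabilityMeasure ν],
        Q.entropy ν ≤ ∑ i ∈ s, P.entropy (ν.map T^[t i]) := by
  classical
  induction s using Finset.induction_on with
  | empty => exact ⟨1, fun k x _ y _ i hi => by simp at hi, fun ν _ => by simp [entropy_one]⟩
  | insert j s hj ih =>
    obtain ⟨Q, hQ, hQle⟩ := ih
    refine ⟨P.comp ⟨T^[t j], hT.iterate (t j)⟩ * Q, ?_, fun ν _ => ?_⟩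
    · rw [Finset.set_biUnion_insert]
      exact (hP.comp_iterate hT (t j)).mul hQ
    · rw [Finset.sum_insert hj]
      exact (entropy_mul_le ν _ Q).trans (add_le_add (entropy_comp ν P _).le (hQle ν))

end IsDynSmall

end FinitePartitionOfUnity

section HasDynCover

/-- `A` is covered by at most `N` open sets, each small at all times before `n`. The bound `N` is
real so that exponential growth rates can be substituted for it. -/
def HasDynCover [PseudoMetricSpace X] (T : X → X) (ε : ℝ) (n : ℕ) (A : Set X) (N : ℝ) : Prop :=
  ∃ C : Finset (Set X), (∀ V ∈ C, IsOpen V ∧ DynSmall T ε (Iio n) V) ∧ A ⊆ ⋃₀ ↑C ∧ C.card ≤ N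

namespace HasDynCover

variable [PseudoMetricSpace X] {T : X → X} {ε : ℝ} {m n : ℕ} {A B : Set X} {N N' : ℝ}

lemma mono (h : HasDynCover T ε n A N) (hm : m ≤ n) (hB : B ⊆ A) (hN : N ≤ N') :
    HasDynCover T ε m B N' := by
  obtain ⟨C, hC, hAC, hcard⟩ := h
  exact ⟨C, fun V hV => ⟨(hC V hV).1, (hC V hV).2.mono (Iio_subset_Iio hm) subset_rfl⟩,
    hB.trans hAC, hcard.trans hN⟩

lemma empty : HasDynCover T ε n ∅ 0 :=
  ⟨∅, by simp, by simp, by simp⟩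

lemma zero (A : Set X) : HasDynCover T ε 0 A 1 :=
  ⟨{univ}, by simp [DynSmall], by simp, by simp⟩

lemma union (hA : HasDynCover T ε n A N) (hB : HasDynCover T ε n B N') :
    HasDynCover T ε n (A ∪ B) (N + N') := by
  classical
  obtain ⟨C, hC, hAC, hcard⟩ := hA
  obtain ⟨D, hD, hBD, hcard'⟩ := hB
  refine ⟨C ∪ D, fun V hV => (Finset.mem_union.1 hV).elim (hC V) (hD V), ?_, ?_⟩
  · rw [Finset.coe_union, sUnion_union]
    exact union_subset_union hAC hBD
  · calc ((C ∪ D).card : ℝ) ≤ C.card + D.card := by exact_mod_cast Finset.card_union_le C D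
      _ ≤ N + N' := add_le_add hcard hcard'

lemma biUnion {ι : Type*} (s : Finset ι) {A : ι → Set X} {N : ι → ℝ}
    (h : ∀ i ∈ s, HasDynCover T ε n (A i) (N i)) :
    HasDynCover T ε n (⋃ i ∈ s, A i) (∑ i ∈ s, N i) := by
  classical
  induction s using Finset.induction_on with
  | empty => simpa using empty
  | insert j s hj ih =>
    rw [Finset.sum_insert hj, Finset.set_biUnion_insert]
    exact (h j (s.mem_insert_self j)).union (ih fun i hi => h i (Finset.mem_insert_of_mem hi))

lemma inter_preimage (hT : Continuous T) (hA : HasDynCover T ε m A N)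
    (hB : HasDynCover T ε n B N') : HasDynCover T ε (m + n) (A ∩ T^[m] ⁻¹' B) (N * N') := by
  classical
  obtain ⟨C, hC, hAC, hcard⟩ := hA
  obtain ⟨D, hD, hBD, hcard'⟩ := hB
  refine ⟨Finset.image₂ (fun V W => V ∩ T^[m] ⁻¹' W) C D, fun S hS => ?_, ?_, ?_⟩
  · obtain ⟨V, hV, W, hW, rfl⟩ := Finset.mem_image₂.1 hS
    refine ⟨(hC V hV).1.inter ((hD W hW).1.preimage (hT.iterate m)), ?_⟩
    refine ((hC V hV).2.inter ((hD W hW).2.preimage_iterate m)).mono (fun i hi => ?_) subset_rfl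
    exact (lt_or_ge i m).imp_right fun hmi => ⟨hmi, hi⟩
  · rintro x ⟨hxA, hxB⟩
    obtain ⟨V, hV, hxV⟩ := hAC hxA
    obtain ⟨W, hW, hxW⟩ := hBD hxB
    exact ⟨_, Finset.mem_image₂_of_mem hV hW, hxV, hxW⟩
  · calc ((Finset.image₂ (fun V W => V ∩ T^[m] ⁻¹' W) C D).card : ℝ) ≤ C.card * D.card := by
          exact_mod_cast Finset.card_image₂_le _ C D
      _ ≤ N * N' := by gcongr; exact hcard.trans' (by positivity)

lemma pow (hT : Continuous T) (h : HasDynCover T ε 1 univ N) (n : ℕ) :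
    HasDynCover T ε n univ (N ^ n) := by
  induction n with
  | zero => simpa using zero univ
  | succ n ih => simpa [pow_succ] using ih.inter_preimage hT h

end HasDynCover

lemma IsFiniteOpenCover.hasDynCover_one [PseudoMetricSpace X] [BoundedSpace X] {ε : ℝ}
    {U : Finset (Set X)} (hU : IsFiniteOpenCover U) (hdiam : ∀ V ∈ U, Metric.diam V ≤ ε)
    (T : X → X) : HasDynCover T ε 1 univ U.card := by
  refine ⟨U, fun V hV => ⟨hU.1 V hV, fun x hx y hy i hi => ?_⟩, hU.2.symm.subset, le_rfl⟩
  obtain rfl : i = 0 := Nat.lt_one_iff.1 hi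
  exact (Metric.dist_le_diam_of_mem (.all V) hx hy).trans (hdiam V hV)

lemma exists_isFiniteOpenCover_diam_le (X : Type*) [PseudoMetricSpace X] [CompactSpace X] {ε : ℝ}
    (hε : 0 < ε) : ∃ U : Finset (Set X), IsFiniteOpenCover U ∧ (∀ V ∈ U, Metric.diam V ≤ ε) ∧
      ∀ x, ∃ V ∈ U, Metric.closedBall x (ε / 4) ⊆ V := by
  classical
  obtain ⟨t, -, ht, hnet⟩ := (isCompact_univ (X := X)).finite_cover_balls (e := ε / 4) (by linarith)
  lift t to Finset X using ht
  have closedBall_subset (x : X) : ∃ V ∈ t.image fun c => Metric.ball c (ε / 2),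
      Metric.closedBall x (ε / 4) ⊆ V := by
    obtain ⟨c, hct, hxc⟩ := mem_iUnion₂.1 (hnet (mem_univ x))
    refine ⟨_, Finset.mem_image_of_mem _ hct, Metric.closedBall_subset_ball' ?_⟩
    linarith [Metric.mem_ball.1 hxc]
  refine ⟨_, ⟨fun V hV => ?_, eq_univ_of_forall fun x => ?_⟩, fun V hV => ?_, closedBall_subset⟩
  · obtain ⟨c, -, rfl⟩ := Finset.mem_image.1 hV
    exact Metric.isOpen_ball
  · obtain ⟨V, hV, hxV⟩ := closedBall_subset x
    exact ⟨V, hV, hxV (Metric.mem_closedBall_self (by linarith))⟩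
  · obtain ⟨c, -, rfl⟩ := Finset.mem_image.1 hV
    linarith [Metric.diam_ball (x := c) (r := ε / 2) (by linarith)]

end HasDynCover

section SeparatedSets

variable [MetricSpace X] {T : X → X} {ε : ℝ} {n : ℕ}

lemma dynDist_comm (T : X → X) (n : ℕ) (x y : X) : dynDist T n x y = dynDist T n y x := by
  simp_rw [dynDist, dist_comm]

lemma dynDist_le_iff (hε : 0 ≤ ε) {x y : X} :
    dynDist T n x y ≤ ε ↔ ∀ i < n, dist (T^[i] x) (T^[i] y) ≤ ε := by
  constructor
  · intro h i hi
    have bdd : BddAbove (range fun k => ⨆ _ : k ∈ Finset.range n, dist (T^[k] x) (T^[k] y)) := by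
      refine ⟨∑ k ∈ Finset.range n, dist (T^[k] x) (T^[k] y), ?_⟩
      rintro _ ⟨k, rfl⟩
      have sum_nonneg : 0 ≤ ∑ k ∈ Finset.range n, dist (T^[k] x) (T^[k] y) :=
        Finset.sum_nonneg fun _ _ => dist_nonneg
      exact Real.iSup_le (fun hk => Finset.single_le_sum
        (f := fun k => dist (T^[k] x) (T^[k] y)) (fun _ _ => dist_nonneg) hk) sum_nonneg
    have := le_ciSup bdd i
    rw [ciSup_pos (Finset.mem_range.2 hi)] at this
    exact this.trans h
  · exact fun h => Real.iSup_le (fun k =>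
      Real.iSup_le (fun hk => h k (Finset.mem_range.1 hk)) hε) hε

lemma HasDynCover.card_le {N : ℝ} {A : Set X} (hA : HasDynCover T ε n A N) (hε : 0 ≤ ε)
    {E : Finset X} (hEA : ↑E ⊆ A) (hE : (E : Set X).Pairwise fun x y => ε < dynDist T n x y) :
    E.card ≤ N := by
  obtain ⟨C, hC, hAC, hcard⟩ := hA
  choose! V hVC hxV using fun x (hx : x ∈ (E : Set X)) => hAC (hEA hx)
  have V_injOn : InjOn V E := fun x hx y hy hxy => by
    by_contra hne
    refine (hE hx hy hne).not_ge ((dynDist_le_iff hε).2 ?_)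
    exact (hC _ (hVC x hx)).2 x (hxV x hx) y (hxy ▸ hxV y hy)
  exact hcard.trans' (by exact_mod_cast Finset.card_le_card_of_injOn V hVC V_injOn)

lemma exists_card_eq_sepNum [CompactSpace X] (hT : Continuous T) (hε : 0 < ε) (n : ℕ) :
    ∃ E : Finset X, (E : Set X).Pairwise (fun x y => ε < dynDist T n x y) ∧
      E.card = sepNum T n univ ε ∧ ∀ x, ∃ y ∈ E, dynDist T n x y ≤ ε := by
  classical
  obtain ⟨U, hU, hdiam, -⟩ := exists_isFiniteOpenCover_diam_le X hε
  set S := {m | ∃ E : Finset X, ↑E ⊆ (univ : Set X) ∧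
    (∀ x ∈ E, ∀ y ∈ E, x ≠ y → ε < dynDist T n x y) ∧ E.card = m}
  have bdd : BddAbove S := by
    refine ⟨U.card ^ n, ?_⟩
    rintro _ ⟨E, hEuniv, hE, rfl⟩
    exact_mod_cast ((hU.hasDynCover_one hdiam T).pow hT n).card_le hε.le hEuniv
      fun x hx y hy => hE x hx y hy
  obtain ⟨E, -, hE, hcard⟩ := Nat.sSup_mem (s := S) ⟨0, ∅, by simp⟩ bdd
  refine ⟨E, fun x hx y hy => hE x hx y hy, hcard, fun x => ?_⟩
  by_contra! hx
  have hxE : x ∉ E := fun hxE => (hx x hxE).not_ge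
    ((dynDist_le_iff hε.le).2 fun i _ => by simpa using hε.le)
  have separated_insert : ((insert x E : Finset X) : Set X).Pairwise
      fun x y => ε < dynDist T n x y := by
    have symm : Std.Symm fun x y => ε < dynDist T n x y :=
      ⟨fun x y => (dynDist_comm T n x y ▸ ·)⟩
    rw [Finset.coe_insert, Set.pairwise_insert_of_symm]
    exact ⟨fun y hy z hz => hE y hy z hz, fun y hy _ => hx y hy⟩
  have := le_csSup bdd ⟨insert x E, subset_univ _, fun y hy z hz => separated_insert hy hz, rfl⟩
  rw [Finset.card_insert_of_notMem hxE, hcard] at this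
  exact absurd this (Nat.lt_succ_self _).not_ge

lemma log_card_le_entropy [MeasurableSpace X] [BorelSpace X] (hε : 0 ≤ ε) {E : Finset X}
    (hne : E.Nonempty) (hE : (E : Set X).Pairwise fun x y => ε < dynDist T n x y)
    {Q : FinitePartitionOfUnity X} (hQ : Q.IsDynSmall T ε (Iio n)) :
    Real.log E.card ≤ Q.entropy (ProbabilityTheory.uniformOn E) := by
  classical
  have := ProbabilityTheory.isProbabilityMeasure_uniformOn E.finite_toSet hne
  rw [← neg_neg (Real.log _), ← Real.log_inv]
  refine Q.neg_log_le_entropy _ fun k => ?_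
  have card_le_one : (E.filter (· ∈ Function.support (Q k))).card ≤ 1 := by
    refine Finset.card_le_one.2 fun x hx y hy => ?_
    rw [Finset.mem_filter] at hx hy
    by_contra hxy
    exact (hE hx.1 hy.1 hxy).not_ge ((dynDist_le_iff hε).2 (hQ k x hx.2 y hy.2))
  have inter_support : (E : Set X) ∩ Function.support (Q k) =
      E.filter (· ∈ Function.support (Q k)) := by
    ext; simp
  rw [measureReal_def, ← ProbabilityTheory.uniformOn_inter_self E.finite_toSet, inter_support,
    ProbabilityTheory.uniformOn_apply_finset, Finset.inter_eq_right.2 (Finset.filter_subset _ E)]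
  rw [ENNReal.toReal_div, ENNReal.toReal_natCast, ENNReal.toReal_natCast, inv_eq_one_div]
  gcongr
  exact_mod_cast card_le_one

end SeparatedSets

section Blocks

lemma sum_range_sum_range_add_mul {M : Type*} [AddCommMonoid M] (e : ℕ → M) (m q : ℕ) :
    ∑ r ∈ Finset.range m, ∑ j ∈ Finset.range q, e (r + j * m) =
      ∑ k ∈ Finset.range (q * m), e k := by
  induction q with
  | zero => simp
  | succ q ih =>
    simp_rw [Finset.sum_range_succ, Finset.sum_add_distrib, ih, add_mul, one_mul,
      Finset.sum_range_add, add_comm]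

namespace FinitePartitionOfUnity

variable [PseudoMetricSpace X] [MeasurableSpace X] [BorelSpace X] {T : X → X} {ε : ℝ} {m n : ℕ}
  {P : FinitePartitionOfUnity X}

lemma IsDynSmall.exists_Iio (hP : P.IsDynSmall T ε (Iio m)) (hT : Continuous T) (hm : 0 < m)
    {r : ℕ} (hr : r ≤ m) (n : ℕ) :
    ∃ Q : FinitePartitionOfUnity X, Q.IsDynSmall T ε (Iio n) ∧
      ∀ (ν : Measure X) [IsProbabilityMeasure ν], Q.entropy ν ≤
        P.entropy ν + ∑ j ∈ Finset.range (n / m + 1), P.entropy (ν.map T^[r + j * m]) := by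
  obtain ⟨Q, hQ, hQle⟩ := exists_isDynSmall_biUnion_Ico hT hP (Finset.range (n / m + 1))
    fun j => r + j * m
  refine ⟨P * Q, (hP.mul hQ).mono fun i (hi : i < n) => ?_, fun ν _ =>
    (P.entropy_mul_le ν Q).trans (by gcongr; exact hQle ν)⟩
  refine (lt_or_ge i m).imp_right fun hmi => mem_iUnion₂.2 ⟨(i - r) / m, ?_, ?_, ?_⟩
  · have : (i - r) / m ≤ n / m := Nat.div_le_div_right (by lia)
    exact Finset.mem_range.2 (by lia)
  · have := Nat.div_mul_le_self (i - r) m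
    lia
  · have := Nat.lt_div_mul_add (a := i - r) hm
    lia

lemma IsDynSmall.mul_le_sum_entropy (hP : P.IsDynSmall T ε (Iio m)) (hT : Continuous T)
    (hm : 0 < m) (ν : Measure X) [IsProbabilityMeasure ν] {H : ℝ}
    (hH : ∀ Q : FinitePartitionOfUnity X, Q.IsDynSmall T ε (Iio n) → H ≤ Q.entropy ν) :
    m * H ≤ 2 * m * Real.log (Fintype.card P.Index) +
      ∑ k ∈ Finset.range n, P.entropy (ν.map T^[k]) := by
  set e : ℕ → ℝ := fun k => P.entropy (ν.map T^[k])
  set L := Real.log (Fintype.card P.Index)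
  have (k : ℕ) : IsProbabilityMeasure (ν.map T^[k]) :=
    Measure.isProbabilityMeasure_map (hT.iterate k).aemeasurable
  have e_le (k) : e k ≤ L := P.entropy_le_log_card _
  have H_le : ∀ r ∈ Finset.range m, H ≤ L + ∑ j ∈ Finset.range (n / m + 1), e (r + j * m) := by
    intro r hr
    obtain ⟨Q, hQ, hQle⟩ := hP.exists_Iio hT hm (Finset.mem_range.1 hr).le n
    exact (hH Q hQ).trans ((hQle ν).trans (by gcongr; exact P.entropy_le_log_card ν))
  have range_subset : Finset.range ((n / m + 1) * m) ⊆ Finset.range (n + m) := by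
    rw [Finset.range_subset_range, add_mul, one_mul]
    gcongr
    exact Nat.div_mul_le_self n m
  calc m * H = ∑ _ ∈ Finset.range m, H := by simp
    _ ≤ ∑ r ∈ Finset.range m, (L + ∑ j ∈ Finset.range (n / m + 1), e (r + j * m)) :=
      Finset.sum_le_sum H_le
    _ = m * L + ∑ k ∈ Finset.range ((n / m + 1) * m), e k := by
      rw [Finset.sum_add_distrib, sum_range_sum_range_add_mul]
      simp
    _ ≤ m * L + ∑ k ∈ Finset.range (n + m), e k := by
      gcongr
      exact fun _ _ _ => P.entropy_nonneg _
    _ = m * L + (∑ k ∈ Finset.range n, e k + ∑ k ∈ Finset.range m, e (n + k)) := by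
      rw [Finset.sum_range_add]
    _ ≤ m * L + (∑ k ∈ Finset.range n, e k + ∑ _ ∈ Finset.range m, L) := by
      gcongr
      exact e_le _
    _ = 2 * m * L + ∑ k ∈ Finset.range n, e k := by
      rw [Finset.sum_const, Finset.card_range, nsmul_eq_mul]
      ring

end FinitePartitionOfUnity

end Blocks

section OrbitAverage

variable [MeasurableSpace X] {T : X → X} {ν : Measure X} {n : ℕ}

/-- The average of the push-forwards of `ν` under `T^[0], …, T^[n - 1]`, the approximately
invariant measures of the Krylov–Bogoliubov argument. -/
noncomputable def orbitAverage (T : X → X) (ν : Measure X) (n : ℕ) : Measure X :=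
  (n : ENNReal)⁻¹ • ∑ k ∈ Finset.range n, ν.map T^[k]

lemma isProbabilityMeasure_orbitAverage [IsProbabilityMeasure ν] (hT : Measurable T)
    (hn : n ≠ 0) : IsProbabilityMeasure (orbitAverage T ν n) := by
  have (k : ℕ) : IsProbabilityMeasure (ν.map T^[k]) :=
    Measure.isProbabilityMeasure_map (hT.iterate k).aemeasurable
  exact ⟨by simp [orbitAverage, ENNReal.inv_mul_cancel, hn]⟩

lemma integral_orbitAverage {g : X → ℝ} (hg : ∀ k, Integrable g (ν.map T^[k])) :
    ∫ x, g x ∂orbitAverage T ν n =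
      ∑ k ∈ Finset.range n, (n : ℝ)⁻¹ * ∫ x, g x ∂ν.map T^[k] := by
  rw [orbitAverage, integral_smul_measure, integral_finsetSum_measure fun k _ => hg k,
    Finset.smul_sum]
  simp

lemma abs_integral_comp_sub_integral_orbitAverage_le [IsProbabilityMeasure ν] (hT : Measurable T)
    {g : X → ℝ} (hg : Measurable g) {C : ℝ} (hC : ∀ x, |g x| ≤ C) :
    |∫ x, g (T x) ∂orbitAverage T ν n - ∫ x, g x ∂orbitAverage T ν n| ≤ 2 * C / n := by
  have (k : ℕ) : IsProbabilityMeasure (ν.map T^[k]) :=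
    Measure.isProbabilityMeasure_map (hT.iterate k).aemeasurable
  have integral_le (k) : |∫ x, g x ∂ν.map T^[k]| ≤ C := by
    simpa using
      norm_integral_le_of_norm_le_const (μ := ν.map T^[k]) (C := C) (f := g) (.of_forall hC)
  have integral_succ (k) : ∫ x, g (T x) ∂ν.map T^[k] = ∫ x, g x ∂ν.map T^[k + 1] := by
    rw [Function.iterate_succ', ← Measure.map_map hT (hT.iterate k),
      integral_map hT.aemeasurable hg.aestronglyMeasurable]
  have integrable_of_bound {f : X → ℝ} (hf : Measurable f) (hfC : ∀ x, |f x| ≤ C) (k : ℕ) :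
      Integrable f (ν.map T^[k]) :=
    .of_bound hf.aestronglyMeasurable C (.of_forall hfC)
  have telescope : ∫ x, g (T x) ∂orbitAverage T ν n - ∫ x, g x ∂orbitAverage T ν n =
      (n : ℝ)⁻¹ * (∫ x, g x ∂ν.map T^[n] - ∫ x, g x ∂ν.map T^[0]) := by
    rw [integral_orbitAverage (integrable_of_bound hg hC),
      integral_orbitAverage (g := fun x => g (T x))
        (integrable_of_bound (hg.comp hT) fun x => hC (T x)), ← Finset.mul_sum,
      ← Finset.mul_sum, ← mul_sub, ← Finset.sum_sub_distrib,
      ← Finset.sum_range_sub fun k => ∫ x, g x ∂ν.map T^[k]]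
    simp_rw [integral_succ]
  rw [telescope, abs_mul, abs_of_nonneg (by positivity), div_eq_inv_mul, two_mul]
  gcongr
  exact (abs_sub _ _).trans (add_le_add (integral_le n) (integral_le 0))

lemma FinitePartitionOfUnity.sum_entropy_map_iterate_le [TopologicalSpace X]
    [OpensMeasurableSpace X] [IsProbabilityMeasure ν] (P : FinitePartitionOfUnity X)
    (hT : Measurable T) (hn : n ≠ 0) :
    ∑ k ∈ Finset.range n, P.entropy (ν.map T^[k]) ≤ n * P.entropy (orbitAverage T ν n) := by
  have (k : ℕ) : IsProbabilityMeasure (ν.map T^[k]) :=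
    Measure.isProbabilityMeasure_map (hT.iterate k).aemeasurable
  have hn' : (0 : ℝ) < n := by positivity
  simp_rw [entropy]
  rw [Finset.sum_comm, Finset.mul_sum]
  gcongr with i
  have jensen := Real.concaveOn_negMulLog.le_map_sum (t := Finset.range n)
    (w := fun _ => (n : ℝ)⁻¹) (p := fun k => ∫ x, P i x ∂ν.map T^[k])
    (fun _ _ => by positivity) (by simp [hn]) fun _ _ => P.integral_nonneg _ i
  simp only [smul_eq_mul, ← Finset.mul_sum (Finset.range n) (fun _ => Real.negMulLog _)] at jensen
  rwa [← integral_orbitAverage fun _ => P.integrable _ i, inv_mul_le_iff₀ hn'] at jensen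

end OrbitAverage

section KrylovBogoliubov

variable [TopologicalSpace X] [CompactSpace X] [MeasurableSpace X]

lemma continuous_integral_probabilityMeasure [OpensMeasurableSpace X] (g : C(X, ℝ)) :
    Continuous fun μ : ProbabilityMeasure X => ∫ x, g x ∂(μ : Measure X) :=
  ProbabilityMeasure.continuous_integral_boundedContinuousFunction
    (BoundedContinuousFunction.mkOfCompact g)

variable [BorelSpace X] [HasOuterApproxClosed X] {T : X → X}

omit [CompactSpace X] in
lemma measurePreserving_of_forall_integral_comp_eq (hT : Continuous T) {ν : Measure X}
    [IsFiniteMeasure ν] (h : ∀ g : C(X, ℝ), ∫ x, g (T x) ∂ν = ∫ x, g x ∂ν) :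
    MeasurePreserving T ν ν := by
  refine ⟨hT.measurable, ext_of_forall_integral_eq_of_IsFiniteMeasure fun g => ?_⟩
  rw [integral_map hT.aemeasurable g.continuous.measurable.aestronglyMeasurable]
  exact h g

lemma exists_mapClusterPt_measurePreserving [T2Space X] (hT : Continuous T) {ι : Type*}
    {l : Filter ι} [l.NeBot] {μ : ι → ProbabilityMeasure X}
    (hμ : ∀ g : C(X, ℝ), Tendsto
      (fun i => ∫ x, g (T x) ∂(μ i : Measure X) - ∫ x, g x ∂(μ i : Measure X)) l (𝓝 0)) :
    ∃ ν : ProbabilityMeasure X, MapClusterPt ν l μ ∧ MeasurePreserving T (ν : Measure X) ν := by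
  obtain ⟨ν, -, hν⟩ := isCompact_univ.exists_mapClusterPt (f := l) (u := μ) (by simp)
  refine ⟨ν, hν, measurePreserving_of_forall_integral_comp_eq hT fun g => ?_⟩
  obtain ⟨U, hUl, hU⟩ := mapClusterPt_iff_ultrafilter.1 hν
  have tendsto_sub := ((continuous_integral_probabilityMeasure (g.comp ⟨T, hT⟩)).sub
    (continuous_integral_probabilityMeasure g)).tendsto ν |>.comp hU
  exact sub_eq_zero.1 (tendsto_nhds_unique tendsto_sub ((hμ g).mono_left hUl))

end KrylovBogoliubov

lemma exists_continuous_sum_eq_one_support_subset [TopologicalSpace X] [NormalSpace X] {ι : Type*}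
    [Fintype ι] {U : ι → Set X} (hUo : ∀ i, IsOpen (U i)) (hU : ⋃ i, U i = univ) :
    ∃ f : ι → C(X, ℝ), (∀ i x, 0 ≤ f i x) ∧ ∑ i, f i = 1 ∧
      ∀ i, Function.support (f i) ⊆ U i := by
  obtain ⟨f, hf⟩ := PartitionOfUnity.exists_isSubordinate_of_locallyFinite isClosed_univ U hUo
    (locallyFinite_of_finite _) hU.symm.subset
  refine ⟨f, f.nonneg, ?_, fun i => (subset_tsupport _).trans (hf i)⟩
  ext x
  simpa [finsum_eq_sum_of_fintype] using f.sum_eq_one (mem_univ x)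

namespace FinitePartitionOfUnity

lemma continuous_entropy [TopologicalSpace X] [CompactSpace X] [MeasurableSpace X]
    [OpensMeasurableSpace X] (P : FinitePartitionOfUnity X) :
    Continuous fun μ : ProbabilityMeasure X => P.entropy (μ : Measure X) :=
  continuous_finsetSum _ fun k _ =>
    Real.continuous_negMulLog.comp (continuous_integral_probabilityMeasure (P k))

lemma exists_isDynSmall_Iio_one [PseudoMetricSpace X] [CompactSpace X] (T : X → X) {ε : ℝ}
    (hε : 0 < ε) : ∃ P : FinitePartitionOfUnity X, P.IsDynSmall T ε (Iio 1) := by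
  obtain ⟨U, hU, hdiam, -⟩ := exists_isFiniteOpenCover_diam_le X hε
  obtain ⟨f, nonneg, sum_eq_one, hf⟩ := exists_continuous_sum_eq_one_support_subset
    (U := fun V : U => (V : Set X)) (fun V => hU.1 V V.2) (sUnion_eq_iUnion.symm.trans hU.2)
  refine ⟨⟨U, f, nonneg, sum_eq_one⟩, fun V x hx y hy i hi => ?_⟩
  obtain rfl : i = 0 := Nat.lt_one_iff.1 hi
  exact (Metric.dist_le_diam_of_mem (.all V.1) (hf V hx) (hf V hy)).trans (hdiam V V.2)

end FinitePartitionOfUnity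

section ScaleEntropy

variable [PseudoMetricSpace X] {T : X → X} {ε c : ℝ}

lemma nonempty_isDynSmall [CompactSpace X] (T : X → X) (hε : 0 < ε) :
    Nonempty {p : ℕ × FinitePartitionOfUnity X // 0 < p.1 ∧ p.2.IsDynSmall T ε (Iio p.1)} :=
  let ⟨P, hP⟩ := FinitePartitionOfUnity.exists_isDynSmall_Iio_one T hε
  ⟨(1, P), one_pos, hP⟩

variable [MeasurableSpace X] {μ : Measure X}

/-- The entropy of `μ` at scale `ε`: the infimum of the entropy rates `P.entropy μ / m` over the
partitions of unity `P` whose members have `d_m`-diameter at most `ε`. -/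
noncomputable def scaleEntropy (T : X → X) (ε : ℝ) (μ : Measure X) : ℝ :=
  ⨅ p : {p : ℕ × FinitePartitionOfUnity X // 0 < p.1 ∧ p.2.IsDynSmall T ε (Iio p.1)},
    p.1.2.entropy μ / p.1.1

lemma le_scaleEntropy [CompactSpace X] (hε : 0 < ε)
    (h : ∀ (m : ℕ) (P : FinitePartitionOfUnity X), 0 < m → P.IsDynSmall T ε (Iio m) →
      c ≤ P.entropy μ / m) : c ≤ scaleEntropy T ε μ :=
  have := nonempty_isDynSmall T hε
  le_ciInf fun p => h _ _ p.2.1 p.2.2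

lemma exists_entropy_div_lt_of_scaleEntropy_lt [CompactSpace X] (hε : 0 < ε)
    (h : scaleEntropy T ε μ < c) :
    ∃ (m : ℕ) (P : FinitePartitionOfUnity X), 0 < m ∧ P.IsDynSmall T ε (Iio m) ∧
      P.entropy μ / m < c := by
  have := nonempty_isDynSmall T hε
  obtain ⟨⟨⟨m, P⟩, hm, hP⟩, hlt⟩ := exists_lt_of_ciInf_lt h
  exact ⟨m, P, hm, hP, hlt⟩

variable [OpensMeasurableSpace X]

lemma bddBelow_range_entropy_div (T : X → X) (ε : ℝ) (μ : Measure X) [IsProbabilityMeasure μ] :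
    BddBelow (range fun p : {p : ℕ × FinitePartitionOfUnity X //
      0 < p.1 ∧ p.2.IsDynSmall T ε (Iio p.1)} => p.1.2.entropy μ / p.1.1) :=
  ⟨0, forall_mem_range.2 fun p => div_nonneg (p.1.2.entropy_nonneg μ) p.1.1.cast_nonneg⟩

lemma FinitePartitionOfUnity.IsDynSmall.scaleEntropy_le [IsProbabilityMeasure μ] {m : ℕ}
    {P : FinitePartitionOfUnity X} (hP : P.IsDynSmall T ε (Iio m)) (hm : 0 < m) :
    scaleEntropy T ε μ ≤ P.entropy μ / m :=
  ciInf_le (bddBelow_range_entropy_div T ε μ) ⟨(m, P), hm, hP⟩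

lemma upperSemicontinuous_scaleEntropy [CompactSpace X] (T : X → X) (ε : ℝ) :
    UpperSemicontinuous fun μ : ProbabilityMeasure X => scaleEntropy T ε (μ : Measure X) :=
  upperSemicontinuous_ciInf (fun μ => bddBelow_range_entropy_div T ε (μ : Measure X)) fun p =>
    (p.1.2.continuous_entropy.div_const _).upperSemicontinuous

end ScaleEntropy

section Misiurewicz

variable [MetricSpace X] [CompactSpace X] [Nonempty X] [MeasurableSpace X] [BorelSpace X]
  {T : X → X} {ε c : ℝ}

lemma exists_almost_invariant_log_sepNum_le (hT : Continuous T) (hε : 0 < ε) {n : ℕ}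
    (hn : 0 < n) : ∃ μ : ProbabilityMeasure X,
      (∀ g : C(X, ℝ), |∫ x, g (T x) ∂(μ : Measure X) - ∫ x, g x ∂(μ : Measure X)| ≤
        2 * ‖g‖ / n) ∧
      ∀ (m : ℕ) (P : FinitePartitionOfUnity X), 0 < m → P.IsDynSmall T ε (Iio m) →
        Real.log (sepNum T n univ ε) / n ≤
          2 * Real.log (Fintype.card P.Index) / n + P.entropy (μ : Measure X) / m := by
  obtain ⟨E, hE, hcard, hspan⟩ := exists_card_eq_sepNum hT hε n
  have hne : E.Nonempty := let ⟨y, hy, _⟩ := hspan (Classical.arbitrary X); ⟨y, hy⟩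
  have := ProbabilityTheory.isProbabilityMeasure_uniformOn E.finite_toSet hne
  set ν := ProbabilityTheory.uniformOn (E : Set X)
  refine ⟨⟨orbitAverage T ν n, isProbabilityMeasure_orbitAverage hT.measurable hn.ne'⟩,
    fun g => abs_integral_comp_sub_integral_orbitAverage_le hT.measurable g.continuous.measurable
      g.norm_coe_le_norm, fun m P hm hP => ?_⟩
  have blocks := (hP.mul_le_sum_entropy hT hm ν fun Q => log_card_le_entropy hε.le hne hE).trans
    (add_le_add_right (P.sum_entropy_map_iterate_le hT.measurable hn.ne') _)
  rw [hcard] at blocks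
  simp only [ProbabilityMeasure.coe_mk]
  field_simp
  linarith

lemma exists_measurePreserving_le_scaleEntropy (hT : Continuous T) (hε : 0 < ε)
    (hc : (c : EReal) < sepEnt T univ ε) : ∃ ν : ProbabilityMeasure X,
      MeasurePreserving T (ν : Measure X) ν ∧ c ≤ scaleEntropy T ε (ν : Measure X) := by
  obtain ⟨φ, hφ, hcφ⟩ := extraction_of_frequently_atTop
    ((frequently_lt_of_lt_limsup (by isBoundedDefault) hc).and_eventually (eventually_gt_atTop 0))
  choose μ hμ hlog using fun i => exists_almost_invariant_log_sepNum_le hT hε (hcφ i).2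
  have tendsto_div (C : ℝ) : Tendsto (fun i => C / φ i) atTop (𝓝 0) :=
    (tendsto_const_div_atTop_nhds_zero_nat C).comp hφ.tendsto_atTop
  obtain ⟨ν, hν, hTν⟩ := exists_mapClusterPt_measurePreserving hT fun g =>
    squeeze_zero_norm (fun i => hμ i g) (tendsto_div _)
  refine ⟨ν, hTν, le_scaleEntropy hε fun m P hm hP => ?_⟩
  obtain ⟨U, hU, hUν⟩ := mapClusterPt_iff_ultrafilter.1 hν
  have tendsto_bound := ((tendsto_div (2 * Real.log (Fintype.card P.Index))).mono_left hU).add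
    (((P.continuous_entropy.tendsto ν).comp hUν).div_const (m : ℝ))
  rw [zero_add] at tendsto_bound
  refine ge_of_tendsto' tendsto_bound fun i => ?_
  exact (EReal.coe_lt_coe_iff.1 (hcφ i).1).le.trans (hlog i m P hm hP)

end Misiurewicz

section IntegralCond

variable [MeasurableSpace X] {μ : Measure X} {A : Set X}

lemma measureReal_mul_integral_cond [IsFiniteMeasure μ] (hA : μ A ≠ 0) (g : X → ℝ) :
    μ.real A * ∫ x, g x ∂ProbabilityTheory.cond μ A = ∫ x in A, g x ∂μ := by
  rw [ProbabilityTheory.cond, integral_smul_measure, ENNReal.toReal_inv, smul_eq_mul,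
    ← measureReal_def, mul_inv_cancel_left₀ ((measureReal_ne_zero_iff).2 hA)]

lemma measurePreserving_cond {T : X → X} (hT : MeasurePreserving T μ μ) (hA : MeasurableSet A)
    (hTA : T ⁻¹' A = A) :
    MeasurePreserving T (ProbabilityTheory.cond μ A) (ProbabilityTheory.cond μ A) :=
  .smul_measure (by simpa only [hTA] using hT.restrict_preimage hA) _

lemma smul_cond_add_smul_cond_compl [IsFiniteMeasure μ] (hA : MeasurableSet A) (hμA : μ A ≠ 0)
    (hμA' : μ Aᶜ ≠ 0) :
    μ A • ProbabilityTheory.cond μ A + μ Aᶜ • ProbabilityTheory.cond μ Aᶜ = μ := by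
  simp [ProbabilityTheory.cond, smul_smul, ENNReal.mul_inv_cancel, *]

lemma ergodic_of_mem_extremePoints {T : X → X} [IsProbabilityMeasure μ] {S : Set (Measure X)}
    (hT : MeasurePreserving T μ μ) (hμ : μ ∈ extremePoints ENNReal S)
    (hS : ∀ A, MeasurableSet A → T ⁻¹' A = A → μ A ≠ 0 → μ Aᶜ ≠ 0 →
      ProbabilityTheory.cond μ A ∈ S) : Ergodic T μ := by
  refine ⟨hT, ⟨fun A hA hTA => eventuallyConst_set'.2 ?_⟩⟩
  rw [ae_eq_empty, ae_eq_univ]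
  by_contra! h
  have cond_eq := hμ.2 (hS A hA hTA h.1 h.2)
    (hS Aᶜ hA.compl (by rw [preimage_compl, hTA]) h.2 ((compl_compl A).symm ▸ h.1))
    ⟨μ A, μ Aᶜ, h.1.bot_lt, h.2.bot_lt, by rw [measure_add_measure_compl hA, measure_univ],
      smul_cond_add_smul_cond_compl hA h.1 h.2⟩
  refine h.2 ?_
  rw [← cond_eq, ProbabilityTheory.cond_apply hA, inter_compl_self, measure_empty, mul_zero]

end IntegralCond

section ApproxIndicator

variable [TopologicalSpace X] [MeasurableSpace X] [BorelSpace X] {μ : Measure X}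
  [IsFiniteMeasure μ] {A : Set X}

lemma exists_tendsto_integral_abs_indicator_sub [NormalSpace X] [μ.WeaklyRegular]
    (hA : MeasurableSet A) : ∃ ρ : ℕ → C(X, ℝ), (∀ n x, ρ n x ∈ Icc (0 : ℝ) 1) ∧
      Tendsto (fun n => ∫ x, |A.indicator 1 x - ρ n x| ∂μ) atTop (𝓝 0) := by
  have integrable_indicator : Integrable (A.indicator (1 : X → ℝ)) μ :=
    (integrable_const 1).indicator hA
  have approx (n : ℕ) : ∃ ρ : C(X, ℝ), (∀ x, ρ x ∈ Icc (0 : ℝ) 1) ∧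
      ∫ x, |A.indicator 1 x - ρ x| ∂μ ≤ 1 / ((n : ℝ) + 1) := by
    obtain ⟨f, hf, hfi⟩ := integrable_indicator.exists_boundedContinuous_integral_sub_le
      (ε := 1 / ((n : ℝ) + 1)) (by positivity)
    refine ⟨⟨fun x => projIcc (0 : ℝ) 1 zero_le_one (f x), by fun_prop⟩,
      fun x => Subtype.coe_prop _, hf.trans' ?_⟩
    refine integral_mono_of_nonneg (.of_forall fun x => abs_nonneg _)
      (integrable_indicator.sub hfi).norm (.of_forall fun x => ?_)
    have indicator_mem : A.indicator (1 : X → ℝ) x ∈ Icc (0 : ℝ) 1 := by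
      by_cases hx : x ∈ A <;> simp [hx]
    have lipschitz := abs_projIcc_sub_projIcc (c := A.indicator 1 x) (d := f x)
      (zero_le_one : (0 : ℝ) ≤ 1)
    rwa [projIcc_of_mem zero_le_one indicator_mem] at lipschitz
  choose ρ hρ hle using approx
  exact ⟨ρ, hρ, squeeze_zero (fun n => MeasureTheory.integral_nonneg fun x => abs_nonneg _) hle
    tendsto_one_div_add_atTop_nhds_zero_nat⟩

lemma tendsto_integral_mul_of_tendsto_integral_abs_sub [CompactSpace X] (hA : MeasurableSet A)
    {ρ : ℕ → C(X, ℝ)} (hρ : Tendsto (fun n => ∫ x, |A.indicator 1 x - ρ n x| ∂μ) atTop (𝓝 0))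
    (g : C(X, ℝ)) :
    Tendsto (fun n => ∫ x, ρ n x * g x ∂μ) atTop (𝓝 (∫ x in A, g x ∂μ)) := by
  have integrable (f : C(X, ℝ)) : Integrable f μ :=
    f.continuous.integrable_of_hasCompactSupport (.of_compactSpace _)
  have integrable_indicator : Integrable (A.indicator (1 : X → ℝ)) μ :=
    (integrable_const 1).indicator hA
  refine tendsto_iff_norm_sub_tendsto_zero.2 (squeeze_zero (fun n => norm_nonneg _) (fun n => ?_)
    (by simpa using hρ.const_mul ‖g‖))
  calc ‖∫ x, ρ n x * g x ∂μ - ∫ x in A, g x ∂μ‖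
      = ‖∫ x, (ρ n x * g x - A.indicator g x) ∂μ‖ := by
        have integrable_mul : Integrable (fun x => ρ n x * g x) μ := integrable (ρ n * g)
        rw [integral_sub integrable_mul ((integrable g).indicator hA), integral_indicator hA]
    _ ≤ ∫ x, ‖ρ n x * g x - A.indicator g x‖ ∂μ := norm_integral_le_integral_norm _
    _ ≤ ∫ x, ‖g‖ * |A.indicator 1 x - ρ n x| ∂μ := by
        refine integral_mono_of_nonneg (.of_forall fun x => norm_nonneg _)
          ((integrable_indicator.sub (integrable (ρ n))).norm.const_mul _) (.of_forall fun x => ?_)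
        have factor : ρ n x * g x - A.indicator g x = -g x * (A.indicator 1 x - ρ n x) := by
          by_cases hx : x ∈ A <;> simp [hx] <;> ring
        simp only [factor, norm_mul, norm_neg]
        exact mul_le_mul_of_nonneg_right (g.norm_coe_le_norm x) (abs_nonneg _)
    _ = ‖g‖ * ∫ x, |A.indicator 1 x - ρ n x| ∂μ := integral_const_mul _ _

end ApproxIndicator

namespace FinitePartitionOfUnity

section Mixing

variable [TopologicalSpace X] [MeasurableSpace X]

lemma entropy_mix (μ : Measure X) (ρ : C(X, ℝ)) (hρ : ∀ x, ρ x ∈ Icc (0 : ℝ) 1)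
    (P Q : FinitePartitionOfUnity X) : (mix ρ hρ P Q).entropy μ =
      ∑ k, Real.negMulLog (∫ x, ρ x * P k x ∂μ) +
        ∑ k, Real.negMulLog (∫ x, (1 - ρ x) * Q k x ∂μ) :=
  Fintype.sum_sum_type _

lemma sum_negMulLog_setIntegral [OpensMeasurableSpace X] {μ : Measure X} [IsFiniteMeasure μ]
    {A : Set X} (hA : μ A ≠ 0) (P : FinitePartitionOfUnity X) :
    ∑ k, Real.negMulLog (∫ x in A, P k x ∂μ) =
      Real.negMulLog (μ.real A) + μ.real A * P.entropy (ProbabilityTheory.cond μ A) := by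
  have := ProbabilityTheory.cond_isProbabilityMeasure hA
  simp_rw [← measureReal_mul_integral_cond hA, Real.negMulLog_mul, Finset.sum_add_distrib,
    ← Finset.mul_sum, ← Finset.sum_mul, P.sum_integral (ProbabilityTheory.cond μ A), one_mul]
  rfl

end Mixing

variable [PseudoMetricSpace X] [MeasurableSpace X] [BorelSpace X] {T : X → X} {ε : ℝ}
  {P Q : FinitePartitionOfUnity X} {μ : Measure X} [IsProbabilityMeasure μ]

lemma IsDynSmall.exists_entropy_le_cond [CompactSpace X] {S : Set ℕ} {A : Set X}
    (hP : P.IsDynSmall T ε S) (hQ : Q.IsDynSmall T ε S) (hA : MeasurableSet A) (hμA : μ A ≠ 0)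
    (hμA' : μ Aᶜ ≠ 0) : ∃ R : FinitePartitionOfUnity X, R.IsDynSmall T ε S ∧
      R.entropy μ ≤ μ.real A * P.entropy (ProbabilityTheory.cond μ A) +
        μ.real Aᶜ * Q.entropy (ProbabilityTheory.cond μ Aᶜ) + 1 := by
  obtain ⟨ρ, hρ, hρA⟩ := exists_tendsto_integral_abs_indicator_sub (μ := μ) hA
  have tendsto_left (k) : Tendsto (fun n => ∫ x, ρ n x * P k x ∂μ) atTop
      (𝓝 (∫ x in A, P k x ∂μ)) :=
    tendsto_integral_mul_of_tendsto_integral_abs_sub hA hρA (P k)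
  have tendsto_right (k) : Tendsto (fun n => ∫ x, (1 - ρ n x) * Q k x ∂μ) atTop
      (𝓝 (∫ x in Aᶜ, Q k x ∂μ)) := by
    refine tendsto_integral_mul_of_tendsto_integral_abs_sub hA.compl (ρ := fun n => 1 - ρ n)
      (hρA.congr fun n => integral_congr_ae (.of_forall fun x => ?_)) (Q k)
    by_cases hx : x ∈ A <;> simp [hx, abs_sub_comm]
  have tendsto_entropy : Tendsto
      (fun n => (FinitePartitionOfUnity.mix (ρ n) (hρ n) P Q).entropy μ) atTop
      (𝓝 (∑ k, Real.negMulLog (∫ x in A, P k x ∂μ) +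
        ∑ k, Real.negMulLog (∫ x in Aᶜ, Q k x ∂μ))) := by
    simp_rw [entropy_mix]
    exact (tendsto_finsetSum _ fun k _ => (Real.continuous_negMulLog.tendsto _).comp
      (tendsto_left k)).add (tendsto_finsetSum _ fun k _ =>
        (Real.continuous_negMulLog.tendsto _).comp (tendsto_right k))
  have entropy_choice : Real.negMulLog (μ.real A) + Real.negMulLog (μ.real Aᶜ) < 1 := by
    rw [probReal_compl_eq_one_sub hA, ← Real.binEntropy_eq_negMulLog_add_negMulLog_one_sub]
    exact Real.binEntropy_le_log_two.trans_lt (by linarith [Real.log_two_lt_d9])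
  have limit_lt :
      ∑ k, Real.negMulLog (∫ x in A, P k x ∂μ) + ∑ k, Real.negMulLog (∫ x in Aᶜ, Q k x ∂μ) <
      μ.real A * P.entropy (ProbabilityTheory.cond μ A) +
        μ.real Aᶜ * Q.entropy (ProbabilityTheory.cond μ Aᶜ) + 1 := by
    rw [sum_negMulLog_setIntegral hμA, sum_negMulLog_setIntegral hμA']
    linarith
  obtain ⟨n, hn⟩ := (tendsto_entropy.eventually_lt_const limit_lt).exists
  exact ⟨_, hP.mix (ρ n) (hρ n) hQ, hn.le⟩

lemma IsDynSmall.exists_entropy_le_mul (hT : Continuous T) (hμ : MeasurePreserving T μ μ) {m : ℕ}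
    (hP : P.IsDynSmall T ε (Iio m)) (hm : 0 < m) (k : ℕ) :
    ∃ Q : FinitePartitionOfUnity X, Q.IsDynSmall T ε (Iio (k * m)) ∧
      Q.entropy μ ≤ k * P.entropy μ := by
  obtain ⟨Q, hQ, hQle⟩ := exists_isDynSmall_biUnion_Ico hT hP (Finset.range k) (· * m)
  refine ⟨Q, hQ.mono fun i (hi : i < k * m) => mem_iUnion₂.2 ⟨i / m,
    Finset.mem_range.2 ((Nat.div_lt_iff_lt_mul hm).2 hi), Nat.div_mul_le_self i m,
    Nat.lt_div_mul_add hm⟩, ?_⟩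
  simpa [(hμ.iterate _).map_eq] using hQle μ

end FinitePartitionOfUnity

section Convexity

variable [PseudoMetricSpace X] [CompactSpace X] [MeasurableSpace X] [BorelSpace X] {T : X → X}
  {ε : ℝ} {μ : Measure X} [IsProbabilityMeasure μ]

lemma le_of_forall_nat_mul_le_mul_add {a b C : ℝ} (h : ∀ n : ℕ, n * a ≤ n * b + C) : a ≤ b := by
  by_contra! hba
  obtain ⟨n, hn⟩ := exists_nat_gt (C / (a - b))
  rw [div_lt_iff₀ (sub_pos.2 hba)] at hn
  linarith [h n]

lemma exists_entropy_le_of_scaleEntropy_lt (hT : Continuous T) (hμ : MeasurePreserving T μ μ)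
    (hε : 0 < ε) {c : ℝ} (hc : scaleEntropy T ε μ < c) : ∃ m > 0, ∀ k : ℕ,
      ∃ P : FinitePartitionOfUnity X, P.IsDynSmall T ε (Iio (k * m)) ∧
        P.entropy μ ≤ k * m * c := by
  obtain ⟨m, P, hm, hP, hlt⟩ := exists_entropy_div_lt_of_scaleEntropy_lt hε hc
  refine ⟨m, hm, fun k => ?_⟩
  obtain ⟨Q, hQ, hQle⟩ := hP.exists_entropy_le_mul hT hμ hm k
  refine ⟨Q, hQ, hQle.trans ?_⟩
  rw [div_lt_iff₀' (by positivity)] at hlt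
  rw [mul_assoc]
  gcongr

lemma scaleEntropy_le_add_cond (hT : Continuous T) (hμ : MeasurePreserving T μ μ) (hε : 0 < ε)
    {A : Set X} (hA : MeasurableSet A) (hTA : T ⁻¹' A = A) (hμA : μ A ≠ 0) (hμA' : μ Aᶜ ≠ 0) :
    scaleEntropy T ε μ ≤ μ.real A * scaleEntropy T ε (ProbabilityTheory.cond μ A) +
      μ.real Aᶜ * scaleEntropy T ε (ProbabilityTheory.cond μ Aᶜ) := by
  have := ProbabilityTheory.cond_isProbabilityMeasure hμA
  have := ProbabilityTheory.cond_isProbabilityMeasure hμA'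
  refine le_of_forall_pos_le_add fun γ hγ => ?_
  obtain ⟨m, hm, hPm⟩ := exists_entropy_le_of_scaleEntropy_lt hT
    (measurePreserving_cond hμ hA hTA) hε (lt_add_of_pos_right _ hγ)
  obtain ⟨n, hn, hQn⟩ := exists_entropy_le_of_scaleEntropy_lt hT
    (measurePreserving_cond hμ hA.compl (by rw [preimage_compl, hTA])) hε
    (lt_add_of_pos_right _ hγ)
  set a := scaleEntropy T ε (ProbabilityTheory.cond μ A)
  set b := scaleEntropy T ε (ProbabilityTheory.cond μ Aᶜ)
  have mn_pos : (0 : ℝ) < m * n := by positivity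
  have bound (k : ℕ) : k * (m * n * scaleEntropy T ε μ) ≤
      k * (m * n * (μ.real A * a + μ.real Aᶜ * b + γ)) + 1 := by
    rcases k.eq_zero_or_pos with rfl | hk
    · simp
    obtain ⟨P, hP, hPle⟩ := hPm (k * n)
    obtain ⟨Q, hQ, hQle⟩ := hQn (k * m)
    rw [mul_right_comm] at hQ
    obtain ⟨R, hR, hRle⟩ := hP.exists_entropy_le_cond hQ hA hμA hμA'
    have := hR.scaleEntropy_le (μ := μ) (by positivity)
    rw [le_div_iff₀' (by positivity)] at this
    push_cast at this hPle hQle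
    calc k * (m * n * scaleEntropy T ε μ) = k * n * m * scaleEntropy T ε μ := by ring
      _ ≤ R.entropy μ := this
      _ ≤ μ.real A * (k * n * m * (a + γ)) + μ.real Aᶜ * (k * m * n * (b + γ)) + 1 :=
        hRle.trans (by gcongr)
      _ = k * (m * n * (μ.real A * a + μ.real Aᶜ * b + γ)) + 1 := by
        rw [probReal_compl_eq_one_sub hA]
        ring
  exact le_of_mul_le_mul_left (le_of_forall_nat_mul_le_mul_add bound) mn_pos

end Convexity

section ErgodicMaximizer

lemma exists_coe_mem_extremePoints [TopologicalSpace X] [CompactSpace X] [MeasurableSpace X]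
    [BorelSpace X] [HasOuterApproxClosed X] {M : Set (ProbabilityMeasure X)} (hM : IsCompact M)
    (hne : M.Nonempty) :
    ∃ μ ∈ M, (μ : Measure X) ∈
      extremePoints ENNReal ((fun ν : ProbabilityMeasure X => (ν : Measure X)) '' M) := by
  set Φ : ProbabilityMeasure X → C(X, ℝ) → ℝ := fun μ g => ∫ x, g x ∂(μ : Measure X)
  have hΦ : Continuous Φ := continuous_pi continuous_integral_probabilityMeasure
  obtain ⟨_, ⟨μ, hμ, rfl⟩, hext⟩ := (hM.image hΦ).extremePoints_nonempty (hne.image Φ)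
  refine ⟨μ, hμ, ⟨μ, hμ, rfl⟩, ?_⟩
  rintro _ ⟨μ₁, hμ₁, rfl⟩ _ ⟨μ₂, hμ₂, rfl⟩ ⟨a, b, ha, hb, hab, hcomb⟩
  have ha' : a ≠ ⊤ := (hab ▸ le_self_add).trans_lt ENNReal.one_lt_top |>.ne
  have hb' : b ≠ ⊤ := (hab ▸ le_add_self).trans_lt ENNReal.one_lt_top |>.ne
  have integrable (ν : ProbabilityMeasure X) (g : C(X, ℝ)) : Integrable g (ν : Measure X) :=
    g.continuous.integrable_of_hasCompactSupport (.of_compactSpace _)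
  have Φ_eq : Φ μ₁ = Φ μ := by
    refine hext ⟨μ₁, hμ₁, rfl⟩ ⟨μ₂, hμ₂, rfl⟩ ⟨a.toReal, b.toReal, ENNReal.toReal_pos ha.ne' ha',
      ENNReal.toReal_pos hb.ne' hb', by rw [← ENNReal.toReal_add ha' hb', hab]; rfl, ?_⟩
    ext g
    simp only [Φ, ← hcomb, Pi.add_apply, Pi.smul_apply]
    rw [integral_add_measure ((integrable μ₁ g).smul_measure ha')
      ((integrable μ₂ g).smul_measure hb'), integral_smul_measure, integral_smul_measure]
  exact ext_of_forall_integral_eq_of_IsFiniteMeasure fun g => congrFun Φ_eq g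

variable [MetricSpace X] [CompactSpace X] [MeasurableSpace X] [BorelSpace X] {T : X → X} {ε : ℝ}

lemma isClosed_setOf_measurePreserving (hT : Continuous T) :
    IsClosed {μ : ProbabilityMeasure X | MeasurePreserving T (μ : Measure X) μ} := by
  have setOf_eq : {μ : ProbabilityMeasure X | MeasurePreserving T (μ : Measure X) μ} =
      ⋂ g : C(X, ℝ), {μ : ProbabilityMeasure X |
        ∫ x, g (T x) ∂(μ : Measure X) = ∫ x, g x ∂(μ : Measure X)} := by
    ext μ
    rw [mem_iInter]
    refine ⟨fun (hμ : MeasurePreserving T _ _) g => ?_,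
      measurePreserving_of_forall_integral_comp_eq hT⟩
    rw [mem_ofPred_eq, ← integral_map hμ.aemeasurable g.continuous.aestronglyMeasurable,
      hμ.map_eq]
  rw [setOf_eq]
  exact isClosed_iInter fun g => isClosed_eq
    (continuous_integral_probabilityMeasure (g.comp ⟨T, hT⟩))
    (continuous_integral_probabilityMeasure g)

lemma exists_ergodic_forall_scaleEntropy_le (hT : Continuous T) (hε : 0 < ε)
    (hne : {ν : ProbabilityMeasure X | MeasurePreserving T (ν : Measure X) ν}.Nonempty) :
    ∃ μ : ProbabilityMeasure X, Ergodic T (μ : Measure X) ∧ ∀ ν : ProbabilityMeasure X,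
      MeasurePreserving T (ν : Measure X) ν →
        scaleEntropy T ε (ν : Measure X) ≤ scaleEntropy T ε (μ : Measure X) := by
  have isClosed_inv := isClosed_setOf_measurePreserving hT
  obtain ⟨ν, hν, hmax⟩ := ((upperSemicontinuous_scaleEntropy T ε).upperSemicontinuousOn
    _).exists_isMaxOn hne isClosed_inv.isCompact
  set a := scaleEntropy T ε (ν : Measure X)
  have le_a (ν' : ProbabilityMeasure X) (h : MeasurePreserving T (ν' : Measure X) ν') :
      scaleEntropy T ε (ν' : Measure X) ≤ a := hmax h
  obtain ⟨μ, ⟨hTμ, haμ⟩, hext⟩ := exists_coe_mem_extremePoints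
    (isClosed_inv.inter ((upperSemicontinuous_scaleEntropy T ε).isClosed_preimage a)).isCompact
    ⟨ν, hν, show a ≤ a from le_rfl⟩
  refine ⟨μ, ergodic_of_mem_extremePoints hTμ hext fun A hA hTA hμA hμA' => ?_,
    fun ν' hν' => (le_a ν' hν').trans haμ⟩
  have hTA' : T ⁻¹' Aᶜ = Aᶜ := by rw [preimage_compl, hTA]
  let μ₁ : ProbabilityMeasure X :=
    ⟨ProbabilityTheory.cond μ A, ProbabilityTheory.cond_isProbabilityMeasure hμA⟩
  let μ₂ : ProbabilityMeasure X :=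
    ⟨ProbabilityTheory.cond μ Aᶜ, ProbabilityTheory.cond_isProbabilityMeasure hμA'⟩
  have inv₁ : MeasurePreserving T (μ₁ : Measure X) μ₁ := measurePreserving_cond hTμ hA hTA
  have le_a_compl := le_a μ₂ (measurePreserving_cond hTμ hA.compl hTA')
  have convex : a ≤ (μ : Measure X).real A * scaleEntropy T ε (μ₁ : Measure X) +
      (1 - (μ : Measure X).real A) * scaleEntropy T ε (μ₂ : Measure X) := by
    rw [← probReal_compl_eq_one_sub hA]
    exact haμ.trans (scaleEntropy_le_add_cond hT hTμ hε hA hTA hμA hμA')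
  have weight_pos : 0 < (μ : Measure X).real A := ENNReal.toReal_pos hμA (measure_ne_top _ _)
  refine ⟨μ₁, ⟨inv₁, (?_ : a ≤ scaleEntropy T ε (μ₁ : Measure X))⟩, rfl⟩
  refine le_of_mul_le_mul_left ?_ weight_pos
  have := mul_le_mul_of_nonneg_left le_a_compl
    (sub_nonneg.2 (measureReal_le_one : (μ : Measure X).real A ≤ 1))
  linarith

end ErgodicMaximizer

section EscapeCount

/-- The number of times `j < n` at which the orbit of `x` lies outside `G`. -/
noncomputable def escapeCount (T : X → X) (G : Set X) (n : ℕ) (x : X) : ℕ :=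
  birkhoffSum T (Gᶜ.indicator 1) n x

lemma escapeCount_add (T : X → X) (G : Set X) (m n : ℕ) (x : X) :
    escapeCount T G (m + n) x = escapeCount T G m x + escapeCount T G n (T^[m] x) :=
  birkhoffSum_add T _ m n x

lemma escapeCount_succ_of_notMem {T : X → X} {G : Set X} {x : X} (hx : x ∉ G) (n : ℕ) :
    escapeCount T G (n + 1) x = escapeCount T G n (T x) + 1 := by
  simp [escapeCount, birkhoffSum_succ', hx, add_comm]

lemma mul_measure_le_escapeCount_le [MeasurableSpace X] {μ : Measure X} {T : X → X}
    (hT : MeasurePreserving T μ μ) {G : Set X} (hG : MeasurableSet G) (n b : ℕ) :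
    b * μ {x | b ≤ escapeCount T G n x} ≤ n * μ Gᶜ := by
  have measurable_term (j : ℕ) :
      Measurable fun x => Gᶜ.indicator (1 : X → ENNReal) (T^[j] x) :=
    (measurable_one.indicator hG.compl).comp (hT.measurable.iterate j)
  have cast_eq (x) : (escapeCount T G n x : ENNReal) =
      ∑ j ∈ Finset.range n, Gᶜ.indicator 1 (T^[j] x) := by
    classical
    simp [escapeCount, birkhoffSum, indicator_apply]
  calc b * μ {x | b ≤ escapeCount T G n x}
      = b * μ {x | (b : ENNReal) ≤ ∑ j ∈ Finset.range n, Gᶜ.indicator 1 (T^[j] x)} := by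
        simp_rw [← cast_eq, Nat.cast_le]
    _ ≤ ∫⁻ x, ∑ j ∈ Finset.range n, Gᶜ.indicator 1 (T^[j] x) ∂μ :=
        mul_meas_ge_le_lintegral (Finset.measurable_fun_sum _ fun j _ => measurable_term j) _
    _ = n * μ Gᶜ := by
        rw [lintegral_finsetSum _ fun j _ => measurable_term j]
        simp_rw [(hT.iterate _).lintegral_comp (measurable_one.indicator hG.compl),
          lintegral_indicator_one hG.compl]
        simp

end EscapeCount

section Tiling

variable [PseudoMetricSpace X] {T : X → X} {ε Q h : ℝ}

lemma HasDynCover.nonneg {n : ℕ} {A : Set X} {N : ℝ} (hA : HasDynCover T ε n A N) : 0 ≤ N :=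
  let ⟨_, _, _, hN⟩ := hA
  hN.trans' (Nat.cast_nonneg _)

lemma HasDynCover.inter_escapeCount_le (hT : Continuous T) {G B : Set X} {ℓ R n b : ℕ} {N W : ℝ}
    (hB : HasDynCover T ε ℓ B N) (hℓR : ℓ ≤ R) (hh : 0 ≤ h) (hW : 1 ≤ W)
    (hrest : ℓ ≤ n → HasDynCover T ε (n - ℓ) {x | escapeCount T G (n - ℓ) x ≤ b}
      (Real.exp (h * ((n - ℓ : ℕ) + R)) * W)) :
    HasDynCover T ε n (B ∩ {x | escapeCount T G n x ≤ b})
      (N * Real.exp (-(h * ℓ)) * (Real.exp (h * (n + R)) * W)) := by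
  rcases le_total ℓ n with hℓn | hnℓ
  · obtain ⟨k, rfl⟩ := Nat.exists_eq_add_of_le hℓn
    rw [Nat.add_sub_cancel_left] at hrest
    refine (hB.inter_preimage hT (hrest hℓn)).mono le_rfl (fun x hx => ⟨hx.1, ?_⟩) (le_of_eq ?_)
    · exact (Nat.le_add_left _ _).trans ((escapeCount_add T G ℓ k x).symm.trans_le hx.2)
    · rw [mul_assoc, ← mul_assoc (Real.exp _), ← Real.exp_add]
      push_cast
      ring_nf
  · refine hB.mono hnℓ inter_subset_left ?_
    rw [mul_assoc, ← mul_assoc (Real.exp _), ← Real.exp_add]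
    refine le_mul_of_one_le_right hB.nonneg (one_le_mul_of_one_le_of_one_le ?_ hW)
    have : h * ℓ ≤ h * R := by gcongr
    exact Real.one_le_exp (by linarith [mul_nonneg hh n.cast_nonneg])

lemma HasDynCover.compl_inter_escapeCount_le (hT : Continuous T) {G : Set X} {n : ℕ} {E : ℝ}
    (hE : 0 ≤ E) (hU : HasDynCover T ε 1 univ Q)
    (hrest : ∀ b : ℕ, HasDynCover T ε n {x | escapeCount T G n x ≤ b} (E * (2 * Q) ^ b)) (b : ℕ) :
    HasDynCover T ε (n + 1) (Gᶜ ∩ {x | escapeCount T G (n + 1) x ≤ b})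
      (1 / 2 * (E * (2 * Q) ^ b)) := by
  have := hU.nonneg
  rcases b with _ | b
  · refine HasDynCover.empty.mono le_rfl ?_ (by positivity)
    rintro x ⟨hxG, hx⟩
    exact absurd hx (by simp [escapeCount_succ_of_notMem hxG])
  · rw [add_comm n 1]
    refine (hU.inter_preimage hT (hrest b)).mono le_rfl (fun x hx => ⟨mem_univ x, ?_⟩)
      (le_of_eq (by ring))
    have := (escapeCount_succ_of_notMem hx.1 n).symm.trans_le ((add_comm n 1).symm ▸ hx.2)
    exact Nat.add_le_add_iff_right.1 this

-- An orbit is cut into blocks along the sets `B i`, and single steps at escape times. The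
-- induction closes because a block costs `N i` symbols and gains the factor `exp (-h * ℓ i)`,
-- with total at most `1 / 2`, and an escape costs `Q` symbols, paid by one factor `2 * Q`.
lemma hasDynCover_escapeCount_le (hT : Continuous T) (hQ : 1 ≤ Q) (hh : 0 ≤ h)
    (hU : HasDynCover T ε 1 univ Q) {ι : Type*} {s : Finset ι} {B : ι → Set X} {ℓ : ι → ℕ}
    {N : ι → ℝ} {R : ℕ} (hℓ : ∀ i ∈ s, 0 < ℓ i) (hℓR : ∀ i ∈ s, ℓ i ≤ R)
    (hB : ∀ i ∈ s, HasDynCover T ε (ℓ i) (B i) (N i))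
    (hsum : ∑ i ∈ s, N i * Real.exp (-(h * ℓ i)) ≤ 1 / 2) (n b : ℕ) :
    HasDynCover T ε n {x | escapeCount T (⋃ i ∈ s, B i) n x ≤ b}
      (Real.exp (h * (n + R)) * (2 * Q) ^ b) := by
  have one_le_pow (b : ℕ) : 1 ≤ (2 * Q) ^ b := one_le_pow₀ (by linarith)
  induction n using Nat.strong_induction_on generalizing b with
  | _ n ih =>
  rcases n with _ | n
  · exact (HasDynCover.zero _).mono le_rfl subset_rfl
      (one_le_mul_of_one_le_of_one_le (Real.one_le_exp (by positivity)) (one_le_pow b))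
  set G := ⋃ i ∈ s, B i
  set E := Real.exp (h * ((n + 1 : ℕ) + R))
  have block : HasDynCover T ε (n + 1) (G ∩ {x | escapeCount T G (n + 1) x ≤ b})
      (1 / 2 * (E * (2 * Q) ^ b)) := by
    refine (HasDynCover.biUnion s fun i hi => (hB i hi).inter_escapeCount_le hT (hℓR i hi) hh
      (one_le_pow b) fun _ => ih _ (Nat.sub_lt n.succ_pos (hℓ i hi)) b).mono le_rfl ?_ ?_
    · rw [iUnion₂_inter]
    · rw [← Finset.sum_mul]
      gcongr
  have escape : HasDynCover T ε (n + 1) (Gᶜ ∩ {x | escapeCount T G (n + 1) x ≤ b})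
      (1 / 2 * (E * (2 * Q) ^ b)) := by
    refine HasDynCover.compl_inter_escapeCount_le hT (Real.exp_pos _).le hU (fun b =>
      (ih n n.lt_succ_self b).mono le_rfl subset_rfl ?_) b
    gcongr
    exact n.le_succ
  refine (block.union escape).mono le_rfl (fun x hx => ?_) (by linarith)
  rw [← union_inter_distrib_right, union_compl_self, univ_inter]
  exact hx

end Tiling

section Recurrence

variable [MeasurableSpace X] {μ : Measure X}

lemma le_measure_limsup [IsFiniteMeasure μ] {G : ℕ → Set X} (hG : ∀ n, MeasurableSet (G n))
    {a : ENNReal} (ha : ∃ᶠ n in atTop, a ≤ μ (G n)) : a ≤ μ (limsup G atTop) := by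
  rw [limsup_eq_iInf_iSup_of_nat]
  have antitone : Antitone fun L => ⋃ n ≥ L, G n := fun L L' hL =>
    biUnion_subset_biUnion_left fun n (hn : L' ≤ n) => hL.trans hn
  refine ge_of_tendsto' (tendsto_measure_iInter_atTop (fun L => (MeasurableSet.iUnion fun n =>
    .iUnion fun _ => hG n).nullMeasurableSet) antitone ⟨0, measure_ne_top _ _⟩) fun L => ?_
  obtain ⟨n, hn, han⟩ := frequently_atTop.1 ha L
  exact han.trans (measure_mono (subset_biUnion_of_mem hn))

lemma iUnion_preimage_iterate_ae_eq_univ {T : X → X} (hT : Ergodic T μ) [IsFiniteMeasure μ]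
    {B : Set X} (hB : MeasurableSet B) (hμB : μ B ≠ 0) : ⋃ j, T^[j] ⁻¹' B =ᵐ[μ] univ := by
  have preimage_subset : T ⁻¹' ⋃ j, T^[j] ⁻¹' B ⊆ ⋃ j, T^[j] ⁻¹' B := by
    rw [preimage_iUnion]
    exact iUnion_subset fun j => subset_iUnion (fun j => T^[j] ⁻¹' B) (j + 1)
  refine (hT.ae_empty_or_univ_of_preimage_ae_le (MeasurableSet.iUnion fun j =>
    hT.measurable.iterate j hB).nullMeasurableSet preimage_subset.eventuallyLE).resolve_left ?_
  exact fun h => hμB (measure_mono_null (subset_iUnion (fun j => T^[j] ⁻¹' B) 0) (ae_eq_empty.1 h))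

lemma exists_lt_measure_biUnion_range {A : ℕ → Set X} {c : ENNReal} (hc : c < μ (⋃ n, A n)) :
    ∃ N, c < μ (⋃ n ∈ Finset.range N, A n) := by
  rw [measure_iUnion_eq_iSup_accumulate, lt_iSup_iff] at hc
  obtain ⟨N, hN⟩ := hc
  refine ⟨N + 1, ?_⟩
  simpa only [Finset.mem_range, Nat.lt_succ_iff, accumulate_def] using hN

lemma exists_forall_exists_lt_measure_biUnion_preimage_iterate [IsProbabilityMeasure μ] {T : X → X}
    (hT : Ergodic T μ) {G : ℕ → Set X} (hG : ∀ n, MeasurableSet (G n)) {a c : ENNReal}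
    (ha : a ≠ 0) (haG : ∃ᶠ n in atTop, a ≤ μ (G n)) (hc : c < 1) :
    ∃ J : ℕ, ∀ L : ℕ, ∃ R : ℕ,
      c < μ (⋃ i ∈ Finset.range J ×ˢ Finset.Ico L R, T^[i.1] ⁻¹' G i.2) := by
  have limsup_ne_zero : μ (limsup G atTop) ≠ 0 := fun h =>
    ha (nonpos_iff_eq_zero.1 (h ▸ le_measure_limsup hG haG))
  have hc_orbit : c < μ (⋃ j, T^[j] ⁻¹' limsup G atTop) := by
    rwa [measure_congr (iUnion_preimage_iterate_ae_eq_univ hT (.measurableSet_limsup hG)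
      limsup_ne_zero), measure_univ]
  obtain ⟨J, hJ⟩ := exists_lt_measure_biUnion_range hc_orbit
  refine ⟨J, fun L => ?_⟩
  have limsup_subset : limsup G atTop ⊆ ⋃ n, G (n + L) := by
    rw [limsup_eq_iInf_iSup_of_nat']
    exact iInter_subset _ L
  have hc_iUnion : c < μ (⋃ n, ⋃ j ∈ Finset.range J, T^[j] ⁻¹' G (n + L)) := by
    refine hJ.trans_le (measure_mono (iUnion₂_subset fun j hj x hx => ?_))
    obtain ⟨n, hn⟩ := mem_iUnion.1 (limsup_subset hx)
    exact mem_iUnion.2 ⟨n, mem_iUnion₂.2 ⟨j, hj, hn⟩⟩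
  obtain ⟨N, hN⟩ := exists_lt_measure_biUnion_range hc_iUnion
  refine ⟨N + L, hN.trans_le (measure_mono <| iUnion₂_subset fun n hn =>
    iUnion₂_subset fun j hj => ?_)⟩
  refine subset_biUnion_of_mem (u := fun i : ℕ × ℕ => T^[i.1] ⁻¹' G i.2) (x := (j, n + L)) ?_
  rw [Finset.mem_range] at hn hj
  simp only [SetLike.mem_coe, Finset.mem_product, Finset.mem_range, Finset.mem_Ico]
  omega

end Recurrence

section EntropyOfCover

lemma log_natCast_le_log {k : ℕ} {r : ℝ} (hr : 1 ≤ r) (hk : k ≤ r) : Real.log k ≤ Real.log r := by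
  rcases k.eq_zero_or_pos with rfl | hk0
  · simpa using Real.log_nonneg hr
  · exact Real.log_le_log (by exact_mod_cast hk0) hk

variable [MeasurableSpace X] {μ : Measure X}

lemma sum_integral_le_measureReal [TopologicalSpace X] [CompactSpace X] [OpensMeasurableSpace X]
    [IsFiniteMeasure μ] {ι : Type*} [Fintype ι] {f : ι → C(X, ℝ)} (hf : ∀ x, ∑ i, f i x ≤ 1)
    {W : Set X} (hW : MeasurableSet W) (hfW : ∀ i, Function.support (f i) ⊆ W) :
    ∑ i, ∫ x, f i x ∂μ ≤ μ.real W := by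
  have integrable (i) : Integrable (f i) μ := (f i).continuous.integrable_of_hasCompactSupport
    (.of_compactSpace _)
  rw [← integral_finsetSum _ fun i _ => integrable i, ← integral_indicator_one hW]
  refine integral_mono (integrable_finsetSum _ fun i _ => integrable i)
    ((integrable_const 1).indicator hW) (le_indicator (fun x _ => hf x) fun x hx => ?_)
  exact Finset.sum_nonpos fun i _ => (Function.notMem_support.1 fun hi => hx (hfW i hi)).le

lemma HasDynCover.exists_isDynSmall_entropy_le [PseudoMetricSpace X] [CompactSpace X]
    [BorelSpace X] [IsProbabilityMeasure μ] {T : X → X} {ε θ N N' : ℝ} {n : ℕ} {A : Set X}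
    (hA : HasDynCover T ε n A N) (hU : HasDynCover T ε n univ N') (hN : 1 ≤ N) (hN' : 1 ≤ N')
    (hμA : μ.real Aᶜ < θ) : ∃ P : FinitePartitionOfUnity X, P.IsDynSmall T ε (Iio n) ∧
      P.entropy μ ≤ Real.log 2 + Real.log N + θ * Real.log N' := by
  obtain ⟨C, hC, hAC, hcard⟩ := hA
  obtain ⟨D, hD, hUD, hcard'⟩ := hU
  obtain ⟨W, hAW, hWo, hμW⟩ := Aᶜ.exists_isOpen_lt_of_lt (ENNReal.ofReal θ)
    ((ENNReal.lt_ofReal_iff_toReal_lt (measure_ne_top μ _)).2 hμA)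
  replace hμW : μ.real W ≤ θ := ((ENNReal.lt_ofReal_iff_toReal_lt (measure_ne_top μ _)).1 hμW).le
  have cover : ⋃ k, Sum.elim (fun V : C => V.1) (fun V : D => V.1 ∩ W) k = univ := by
    refine eq_univ_of_forall fun x => mem_iUnion.2 ?_
    by_cases hx : x ∈ A
    · obtain ⟨V, hV, hxV⟩ := hAC hx
      exact ⟨.inl ⟨V, hV⟩, hxV⟩
    · obtain ⟨V, hV, hxV⟩ := hUD (mem_univ x)
      exact ⟨.inr ⟨V, hV⟩, hxV, hAW hx⟩
  obtain ⟨f, nonneg, sum_eq_one, hf⟩ := exists_continuous_sum_eq_one_support_subset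
    (fun | .inl V => (hC V V.2).1 | .inr V => (hD V V.2).1.inter hWo) cover
  let P : FinitePartitionOfUnity X := ⟨C ⊕ D, f, nonneg, sum_eq_one⟩
  refine ⟨P, ?_, ?_⟩
  · rintro (V | V)
    · exact (hC V V.2).2.mono subset_rfl (hf (.inl V))
    · exact (hD V V.2).2.mono subset_rfl ((hf (.inr V)).trans inter_subset_left)
  have sum_inr_le : ∑ V, ∫ x, P (.inr V) x ∂μ ≤ θ := by
    refine (sum_integral_le_measureReal (fun x => ?_) hWo.measurableSet fun V =>
      (hf (.inr V)).trans inter_subset_right).trans hμW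
    rw [← P.sum_apply x, Fintype.sum_sum_type]
    exact le_add_of_nonneg_left (Finset.sum_nonneg fun V _ => P.nonneg _ x)
  have sum_inl_le : ∑ V, ∫ x, P (.inl V) x ∂μ ≤ 1 := by
    rw [← P.sum_integral μ, Fintype.sum_sum_type]
    exact le_add_of_nonneg_right (Finset.sum_nonneg fun V _ => P.integral_nonneg μ _)
  have hθ : 0 ≤ θ := measureReal_nonneg.trans hμW
  calc P.entropy μ
      ≤ Real.log 2 + (∑ V, ∫ x, P (.inl V) x ∂μ) * Real.log (Fintype.card C) +
          (∑ V, ∫ x, P (.inr V) x ∂μ) * Real.log (Fintype.card D) :=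
        sum_negMulLog_sum_type_le (fun k => P.integral_nonneg μ k) (P.sum_integral μ)
    _ ≤ Real.log 2 + 1 * Real.log N + θ * Real.log N' := by
        rw [Fintype.card_coe, Fintype.card_coe]
        gcongr Real.log 2 + ?_ * ?_ + ?_ * ?_
        exacts [log_natCast_le_log hN hcard, log_natCast_le_log hN' hcard']
    _ = Real.log 2 + Real.log N + θ * Real.log N' := by rw [one_mul]

end EntropyOfCover

section KatokEntropyFormula

lemma eventually_forall_sum_product_Ico_le {Q h η : ℝ} (hQ : 1 ≤ Q) (hh : 0 ≤ h) (hη : 0 < η)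
    (J : ℕ) : ∀ᶠ L : ℕ in atTop, ∀ R, ∑ i ∈ Finset.range J ×ˢ Finset.Ico L R,
      Q ^ i.1 * Real.exp (h * i.2) * Real.exp (-((h + η) * (i.1 + i.2 : ℕ))) ≤ 1 / 2 := by
  set r := Real.exp (-η)
  have r_pos : 0 < r := Real.exp_pos _
  have r_lt_one : r < 1 := Real.exp_lt_one_iff.2 (neg_lt_zero.2 hη)
  have tendsto_tail : Tendsto (fun L : ℕ => J * Q ^ J * (r ^ L / (1 - r))) atTop (𝓝 0) := by
    simpa using ((tendsto_pow_atTop_nhds_zero_of_lt_one r_pos.le r_lt_one).div_const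
      (1 - r)).const_mul (J * Q ^ J)
  have term_le (j k : ℕ) (hj : j ∈ Finset.range J) :
      Q ^ j * Real.exp (h * k) * Real.exp (-((h + η) * (j + k : ℕ))) ≤ Q ^ J * r ^ k := by
    rw [mul_assoc, ← Real.exp_add, ← Real.exp_nat_mul]
    gcongr
    · exact (Finset.mem_range.1 hj).le
    · have : 0 ≤ (h + η) * j := by positivity
      push_cast
      linarith
  filter_upwards [tendsto_tail.eventually_le_const one_half_pos] with L hL R
  calc ∑ i ∈ Finset.range J ×ˢ Finset.Ico L R,
        Q ^ i.1 * Real.exp (h * i.2) * Real.exp (-((h + η) * (i.1 + i.2 : ℕ)))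
      ≤ ∑ i ∈ Finset.range J ×ˢ Finset.Ico L R, Q ^ J * r ^ i.2 :=
        Finset.sum_le_sum fun i hi => term_le _ _ (Finset.mem_product.1 hi).1
    _ = J * Q ^ J * ∑ k ∈ Finset.Ico L R, r ^ k := by
        simp [Finset.sum_product, Finset.mul_sum, mul_assoc]
    _ ≤ J * Q ^ J * (r ^ L / (1 - r)) := by
        gcongr
        exact geom_sum_Ico_le_of_lt_one r_pos.le r_lt_one
    _ ≤ 1 / 2 := hL

lemma measureReal_compl_escapeCount_le_lt [MeasurableSpace X] {μ : Measure X} [IsFiniteMeasure μ]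
    {T : X → X} (hT : MeasurePreserving T μ μ) {G : Set X} (hG : MeasurableSet G) {η : ℝ}
    (hη : 0 < η) (hμG : μ.real Gᶜ < η ^ 2) {n : ℕ} (hn : 0 < n) :
    μ.real {x | escapeCount T G n x ≤ ⌊η * n⌋₊}ᶜ < η := by
  have compl_eq : {x | escapeCount T G n x ≤ ⌊η * n⌋₊}ᶜ =
      {x | ⌊η * n⌋₊ + 1 ≤ escapeCount T G n x} := by
    ext x
    exact not_le (α := ℕ)
  have markov := ENNReal.toReal_mono (by finiteness)
    (mul_measure_le_escapeCount_le hT hG n (⌊η * n⌋₊ + 1))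
  rw [ENNReal.toReal_mul, ENNReal.toReal_mul, ENNReal.toReal_natCast, ENNReal.toReal_natCast,
    ← compl_eq] at markov
  push_cast at markov
  have : (0 : ℝ) < n := by exact_mod_cast hn
  refine lt_of_mul_lt_mul_left (a := η * n) ?_ (by positivity)
  calc η * n * μ.real {x | escapeCount T G n x ≤ ⌊η * n⌋₊}ᶜ
      ≤ (⌊η * n⌋₊ + 1) * μ.real {x | escapeCount T G n x ≤ ⌊η * n⌋₊}ᶜ := by
        gcongr
        exact (Nat.lt_floor_add_one _).le
    _ ≤ n * μ.real Gᶜ := markov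
    _ < n * η ^ 2 := by gcongr
    _ = η * n * η := by ring

variable [PseudoMetricSpace X] [MeasurableSpace X] {μ : Measure X} [IsProbabilityMeasure μ]
  {T : X → X} {ε Q h η : ℝ} {G : ℕ → Set X} {a : ENNReal}

lemma exists_forall_hasDynCover_measureReal_compl_lt (hT : Continuous T) (hμ : Ergodic T μ)
    (hU : HasDynCover T ε 1 univ Q) (hQ : 1 ≤ Q) (hh : 0 ≤ h) (hG : ∀ n, MeasurableSet (G n))
    (ha : a ≠ 0) (haG : ∃ᶠ n in atTop, a ≤ μ (G n))
    (hGcov : ∀ᶠ n : ℕ in atTop, HasDynCover T ε n (G n) (Real.exp (h * n))) (hη : 0 < η) :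
    ∃ C : ℕ, ∀ n : ℕ, 0 < n → ∃ A,
      HasDynCover T ε n A (Real.exp ((h + η) * (n + C)) * (2 * Q) ^ ⌊η * n⌋₊) ∧
        μ.real Aᶜ < η := by
  obtain ⟨J, hJ⟩ := exists_forall_exists_lt_measure_biUnion_preimage_iterate hμ hG ha haG
    (c := ENNReal.ofReal (1 - η ^ 2)) (by simpa using pow_pos hη 2)
  obtain ⟨L, hsum, hL_cov, hL_pos⟩ := ((eventually_forall_sum_product_Ico_le hQ hh hη J).and
    ((eventually_forall_ge_atTop.2 hGcov).and (eventually_gt_atTop 0))).exists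
  obtain ⟨R, hR⟩ := hJ L
  have mem_s {i : ℕ × ℕ} (hi : i ∈ Finset.range J ×ˢ Finset.Ico L R) :
      i.1 < J ∧ L ≤ i.2 ∧ i.2 < R := by
    simpa using hi
  have block_cover : ∀ i ∈ Finset.range J ×ˢ Finset.Ico L R, HasDynCover T ε (i.1 + i.2)
      (T^[i.1] ⁻¹' G i.2) (Q ^ i.1 * Real.exp (h * i.2)) := fun i hi => by
    simpa using (hU.pow hT i.1).inter_preimage hT (hL_cov i.2 (mem_s hi).2.1)
  set B := ⋃ i ∈ Finset.range J ×ˢ Finset.Ico L R, T^[i.1] ⁻¹' G i.2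
  have measurableSet_B : MeasurableSet B :=
    Finset.measurableSet_biUnion _ fun i _ => hμ.measurable.iterate i.1 (hG i.2)
  have measureReal_compl_B : μ.real Bᶜ < η ^ 2 := by
    rw [probReal_compl_eq_one_sub measurableSet_B]
    rw [← ofReal_measureReal (h := measure_ne_top μ B), ENNReal.ofReal_lt_ofReal_iff'] at hR
    linarith [hR.1]
  refine ⟨J + R, fun n hn => ⟨_, ?_, measureReal_compl_escapeCount_le_lt
    hμ.toMeasurePreserving measurableSet_B hη measureReal_compl_B hn⟩⟩
  exact hasDynCover_escapeCount_le hT hQ (by positivity) hU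
    (fun i hi => by have := mem_s hi; lia) (fun i hi => by have := mem_s hi; lia)
    block_cover (hsum R) n _

variable [CompactSpace X] [BorelSpace X]

lemma scaleEntropy_le_of_forall_hasDynCover (hT : Continuous T)
    (hU : HasDynCover T ε 1 univ Q) (hQ : 1 ≤ Q) (hh : 0 ≤ h) (hη : 0 ≤ η) {C : ℕ}
    (hC : ∀ n : ℕ, 0 < n → ∃ A,
      HasDynCover T ε n A (Real.exp (h * (n + C)) * (2 * Q) ^ ⌊η * n⌋₊) ∧ μ.real Aᶜ < η) :
    scaleEntropy T ε μ ≤ h + η * (Real.log (2 * Q) + Real.log Q) := by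
  have log_nonneg : 0 ≤ Real.log (2 * Q) := Real.log_nonneg (by linarith)
  refine le_of_forall_nat_mul_le_mul_add (C := Real.log 2 + h * C) fun n => ?_
  rcases n.eq_zero_or_pos with rfl | hn
  · simp only [Nat.cast_zero, zero_mul, zero_add]
    positivity
  obtain ⟨A, hA, hμA⟩ := hC n hn
  obtain ⟨P, hP, hPle⟩ := hA.exists_isDynSmall_entropy_le (hU.pow hT n)
    (one_le_mul_of_one_le_of_one_le (Real.one_le_exp (by positivity))
      (one_le_pow₀ (by linarith))) (one_le_pow₀ hQ) hμA
  have n_pos : (0 : ℝ) < n := by exact_mod_cast hn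
  calc n * scaleEntropy T ε μ ≤ P.entropy μ := (le_div_iff₀' n_pos).1 (hP.scaleEntropy_le hn)
    _ ≤ _ := hPle
    _ = Real.log 2 + (h * (n + C) + ⌊η * n⌋₊ * Real.log (2 * Q)) + η * (n * Real.log Q) := by
        rw [Real.log_mul (by positivity) (by positivity), Real.log_exp, Real.log_pow, Real.log_pow]
    _ ≤ Real.log 2 + (h * (n + C) + η * n * Real.log (2 * Q)) + η * (n * Real.log Q) := by
        gcongr
        exact Nat.floor_le (by positivity)
    _ = n * (h + η * (Real.log (2 * Q) + Real.log Q)) + (Real.log 2 + h * C) := by ring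

lemma scaleEntropy_le_of_eventually_hasDynCover (hT : Continuous T)
    (hμ : Ergodic T μ) (hU : HasDynCover T ε 1 univ Q) (hQ : 1 ≤ Q) (hh : 0 ≤ h)
    (hG : ∀ n, MeasurableSet (G n)) (ha : a ≠ 0) (haG : ∃ᶠ n in atTop, a ≤ μ (G n))
    (hGcov : ∀ᶠ n : ℕ in atTop, HasDynCover T ε n (G n) (Real.exp (h * n))) :
    scaleEntropy T ε μ ≤ h := by
  have tendsto_bound : Tendsto (fun η => h + η + η * (Real.log (2 * Q) + Real.log Q)) (𝓝[>] 0)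
      (𝓝 h) := by
    refine tendsto_nhdsWithin_of_tendsto_nhds ?_
    exact Continuous.tendsto' (by fun_prop) _ _ (by simp)
  refine ge_of_tendsto tendsto_bound (eventually_mem_nhdsWithin.mono fun η (hη : 0 < η) => ?_)
  obtain ⟨C, hC⟩ := exists_forall_hasDynCover_measureReal_compl_lt hT hμ hU hQ hh hG ha haG
    hGcov hη
  exact scaleEntropy_le_of_forall_hasDynCover hT hU hQ (by positivity) hη.le hC

end KatokEntropyFormula

section ShapiraEntropy

lemma finite_dynRefine (T : X → X) (U : Finset (Set X)) (n : ℕ) : (dynRefine T U n).Finite :=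
  (finite_range fun f : Fin n → U => ⋂ i : Fin n, T^[(i : ℕ)] ⁻¹' (f i : Set X)).subset <| by
    rintro _ ⟨f, hf, rfl⟩
    exact ⟨fun i => ⟨f i, hf i⟩, rfl⟩

lemma sUnion_dynRefine (T : X → X) {U : Finset (Set X)} (hU : ⋃₀ (U : Set (Set X)) = univ)
    (n : ℕ) : ⋃₀ dynRefine T U n = univ := by
  refine eq_univ_of_forall fun x => ?_
  choose V hV hxV using fun i : Fin n => mem_sUnion.1 (hU.symm.subset (mem_univ (T^[(i : ℕ)] x)))
  exact ⟨_, ⟨V, hV, rfl⟩, mem_iInter.2 hxV⟩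

lemma isOpen_of_mem_dynRefine [TopologicalSpace X] {T : X → X} (hT : Continuous T)
    {U : Finset (Set X)} (hU : ∀ V ∈ U, IsOpen V) {n : ℕ} {W : Set X} (hW : W ∈ dynRefine T U n) :
    IsOpen W := by
  obtain ⟨f, hf, rfl⟩ := hW
  exact isOpen_iInter_of_finite fun i => (hU _ (hf i)).preimage (hT.iterate i)

lemma hasDynCover_sUnion_of_subset_dynRefine [PseudoMetricSpace X] [BoundedSpace X] {T : X → X}
    (hT : Continuous T) {U C : Finset (Set X)} (hU : ∀ V ∈ U, IsOpen V) {ε : ℝ}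
    (hdiam : ∀ V ∈ U, Metric.diam V ≤ ε) {n : ℕ} (hC : ↑C ⊆ dynRefine T U n) :
    HasDynCover T ε n (⋃₀ C) C.card := by
  refine ⟨C, fun V hV => ⟨isOpen_of_mem_dynRefine hT hU (hC hV), fun x hx y hy i hi => ?_⟩,
    subset_rfl, le_rfl⟩
  obtain ⟨f, hf, rfl⟩ := hC hV
  exact (Metric.dist_le_diam_of_mem (.all (f ⟨i, hi⟩)) (mem_iInter.1 hx ⟨i, hi⟩)
    (mem_iInter.1 hy ⟨i, hi⟩)).trans (hdiam _ (hf _))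

variable [MeasurableSpace X] {μ : Measure X} [IsProbabilityMeasure μ] {T : X → X}
  {U : Finset (Set X)} {δ ε : ℝ}

lemma exists_card_eq_shapiraNum (T : X → X) (hU : ⋃₀ (U : Set (Set X)) = univ) (hδ : δ ≤ 1)
    (n : ℕ) : ∃ C : Finset (Set X), ↑C ⊆ dynRefine T U n ∧ ENNReal.ofReal δ ≤ μ (⋃₀ C) ∧
      C.card = shapiraNum T μ U n δ :=
  Nat.sInf_mem (s := {m | ∃ C : Finset (Set X), (C : Set (Set X)) ⊆ dynRefine T U n ∧
    ENNReal.ofReal δ ≤ μ (⋃₀ C) ∧ C.card = m})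
    ⟨_, (finite_dynRefine T U n).toFinset, by simp, by simpa [sUnion_dynRefine T hU n] using hδ,
      rfl⟩

lemma shapiraNum_pos (T : X → X) (hU : ⋃₀ (U : Set (Set X)) = univ) (hδ : δ ∈ Ioc 0 1) (n : ℕ) :
    0 < shapiraNum T μ U n δ := by
  obtain ⟨C, -, hμC, hcard⟩ := exists_card_eq_shapiraNum (μ := μ) T hU hδ.2 n
  rw [← hcard, Finset.card_pos, Finset.nonempty_iff_ne_empty]
  rintro rfl
  simp [hδ.1.not_ge] at hμC

lemma scaleEntropy_le_shapiraEnt [PseudoMetricSpace X] [CompactSpace X] [BorelSpace X]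
    (hT : Continuous T) (hμ : Ergodic T μ) (hδ : δ ∈ Ioc 0 1) (hU : IsFiniteOpenCover U)
    (hdiam : ∀ V ∈ U, Metric.diam V ≤ ε) :
    (scaleEntropy T ε μ : EReal) ≤ shapiraEnt T μ U δ := by
  have num_pos (n) : (1 : ℝ) ≤ shapiraNum T μ U n δ := by
    exact_mod_cast shapiraNum_pos T hU.2 hδ n
  choose C hC hμC hcard using exists_card_eq_shapiraNum (μ := μ) T hU.2 hδ.2
  refine EReal.le_of_forall_lt_iff_le.1 fun h hh => EReal.coe_le_coe_iff.2 ?_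
  have eventually_lt : ∀ᶠ n : ℕ in atTop, Real.log (shapiraNum T μ U n δ) / n < h :=
    (eventually_lt_of_limsup_lt hh).mono fun n => EReal.coe_lt_coe_iff.1
  obtain ⟨n, hn⟩ := eventually_lt.exists
  have h_nonneg : 0 ≤ h := (div_nonneg (Real.log_nonneg (num_pos n)) n.cast_nonneg).trans hn.le
  have one_le_card : (1 : ℝ) ≤ U.card := by
    have : Nonempty X := nonempty_of_isProbabilityMeasure μ
    rw [Nat.one_le_cast, Finset.one_le_card, ← Finset.coe_nonempty]
    exact Nonempty.of_sUnion (hU.2 ▸ univ_nonempty)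
  have isOpen_sUnion_C (n) : IsOpen (⋃₀ (C n : Set (Set X))) :=
    isOpen_sUnion fun _ hV => isOpen_of_mem_dynRefine hT hU.1 (hC n hV)
  refine scaleEntropy_le_of_eventually_hasDynCover hT hμ (hU.hasDynCover_one hdiam T) one_le_card
    h_nonneg (fun n => (isOpen_sUnion_C n).measurableSet) (ENNReal.ofReal_pos.2 hδ.1).ne'
    (.of_forall hμC) ?_
  filter_upwards [eventually_lt, eventually_gt_atTop 0] with n hn n_pos
  refine (hasDynCover_sUnion_of_subset_dynRefine hT hU.1 hdiam (hC n)).mono le_rfl subset_rfl ?_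
  rw [hcard, ← Real.log_le_iff_le_exp (zero_lt_one.trans_le (num_pos n))]
  exact (div_le_iff₀ (by exact_mod_cast n_pos)).1 hn.le

variable [MetricSpace X] [CompactSpace X] {r : ℝ}

lemma shapiraNum_le_sepNum (hT : Continuous T) (hr : 0 < r)
    (hU : ∀ x, ∃ V ∈ U, Metric.closedBall x r ⊆ V) (hδ : δ ≤ 1) (n : ℕ) :
    shapiraNum T μ U n δ ≤ sepNum T n univ r := by
  classical
  obtain ⟨E, -, hcard, hspan⟩ := exists_card_eq_sepNum hT hr n
  choose V hVU hV using hU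
  let cell (y : X) : Set X := ⋂ i : Fin n, T^[(i : ℕ)] ⁻¹' V (T^[(i : ℕ)] y)
  have cover : ⋃₀ (E.image cell : Set (Set X)) = univ := by
    refine eq_univ_of_forall fun x => ?_
    obtain ⟨y, hy, hxy⟩ := hspan x
    exact ⟨cell y, Finset.mem_image_of_mem _ hy, mem_iInter.2 fun i =>
      hV _ ((dynDist_le_iff hr.le).1 hxy i i.2)⟩
  rw [← hcard]
  refine le_trans (Nat.sInf_le ⟨E.image cell, ?_, ?_, rfl⟩) Finset.card_image_le
  · intro W hW
    obtain ⟨y, -, rfl⟩ := Finset.mem_image.1 hW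
    exact ⟨fun i => V (T^[(i : ℕ)] y), fun i => hVU _, rfl⟩
  · rw [cover, measure_univ]
    exact ENNReal.ofReal_le_one.2 hδ

lemma shapiraEnt_le_sepEnt (hT : Continuous T) (hr : 0 < r) (hUcover : ⋃₀ (U : Set (Set X)) = univ)
    (hU : ∀ x, ∃ V ∈ U, Metric.closedBall x r ⊆ V) (hδ : δ ∈ Ioc 0 1) :
    shapiraEnt T μ U δ ≤ sepEnt T univ r :=
  limsup_le_limsup <| .of_forall fun n => EReal.coe_le_coe_iff.2 <| by
    gcongr
    · exact_mod_cast shapiraNum_pos T hUcover hδ n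
    · exact shapiraNum_le_sepNum hT hr hU hδ.2 n

end ShapiraEntropy

section VariationalPrinciple

/-- The right-hand side of the variational principle at scale `ε`: the supremum over ergodic
measures of the infimum of the Shapira entropies of the finite open covers of mesh at most `ε`. -/
noncomputable def shapiraEntAtScale [PseudoMetricSpace X] [MeasurableSpace X] (T : X → X)
    (δ ε : ℝ) : EReal :=
  ⨆ μ ∈ ergodicMeasures T, ⨅ U ∈ {U : Finset (Set X) |
    IsFiniteOpenCover U ∧ ∀ V ∈ U, Metric.diam V ≤ ε}, shapiraEnt T μ U δ

variable [MetricSpace X] [CompactSpace X] [MeasurableSpace X] {T : X → X} {δ ε : ℝ}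

lemma shapiraEntAtScale_le_sepEnt (hT : Continuous T) (hδ : δ ∈ Ioc 0 1) (hε : 0 < ε) :
    shapiraEntAtScale T δ ε ≤ sepEnt T univ (ε / 4) := by
  obtain ⟨U, hU, hdiam, hLebesgue⟩ := exists_isFiniteOpenCover_diam_le X hε
  refine iSup₂_le fun μ hμ => (iInf₂_le U ⟨hU, hdiam⟩).trans ?_
  have := hμ.1
  exact shapiraEnt_le_sepEnt hT (by positivity) hU.2 hLebesgue hδ

lemma sepEnt_le_shapiraEntAtScale [Nonempty X] [BorelSpace X] (hT : Continuous T)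
    (hδ : δ ∈ Ioc 0 1) (hε : 0 < ε) : sepEnt T univ ε ≤ shapiraEntAtScale T δ ε := by
  refine EReal.ge_of_forall_gt_iff_ge.1 fun c hc => ?_
  obtain ⟨ν, hν, hcν⟩ := exists_measurePreserving_le_scaleEntropy hT hε hc
  obtain ⟨μ, hμ, hmax⟩ := exists_ergodic_forall_scaleEntropy_le hT hε ⟨ν, hν⟩
  calc (c : EReal) ≤ scaleEntropy T ε (μ : Measure X) :=
        EReal.coe_le_coe_iff.2 (hcν.trans (hmax ν hν))
    _ ≤ ⨅ U ∈ {U : Finset (Set X) | IsFiniteOpenCover U ∧ ∀ V ∈ U, Metric.diam V ≤ ε},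
        shapiraEnt T μ U δ :=
      le_iInf₂ fun U hU => scaleEntropy_le_shapiraEnt hT hμ hδ hU.1 hU.2
    _ ≤ shapiraEntAtScale T δ ε :=
      le_iSup₂ (f := fun (μ : Measure X) (_ : μ ∈ ergodicMeasures T) =>
        ⨅ U ∈ {U : Finset (Set X) | IsFiniteOpenCover U ∧ ∀ V ∈ U, Metric.diam V ≤ ε},
          shapiraEnt T μ U δ) (μ : Measure X) ⟨inferInstance, hμ⟩

end VariationalPrinciple

section LogarithmicScale

lemma eventually_log_one_div_pos : ∀ᶠ ε : ℝ in 𝓝[>] 0, 0 < Real.log (1 / ε) :=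
  mem_of_superset (Ioo_mem_nhdsGT zero_lt_one) fun _ hε =>
    Real.log_pos (one_lt_one_div hε.1 hε.2)

lemma tendsto_div_const_nhdsGT_zero {c : ℝ} (hc : 0 < c) :
    Tendsto (fun ε : ℝ => ε / c) (𝓝[>] 0) (𝓝[>] 0) := by
  refine tendsto_nhdsWithin_iff.2 ⟨?_, eventually_mem_nhdsWithin.mono fun ε hε => div_pos hε hc⟩
  simpa using (tendsto_id.div_const c).mono_left (nhdsWithin_le_nhds (a := (0 : ℝ)))

lemma limsup_comp_div_const_div_log_le (f : ℝ → EReal) {c : ℝ} (hc : 0 < c) :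
    limsup (fun ε : ℝ => f (ε / c) / (Real.log (1 / ε) : ℝ)) (𝓝[>] 0) ≤
      limsup (fun ε : ℝ => f ε / (Real.log (1 / ε) : ℝ)) (𝓝[>] 0) := by
  refine EReal.le_of_forall_lt_iff_le.1 fun b hb => ?_
  obtain ⟨a, ha, hab⟩ := EReal.lt_iff_exists_real_btwn.1 hb
  have hab : a < b := EReal.coe_lt_coe_iff.1 hab
  have tendsto_scale := tendsto_div_const_nhdsGT_zero hc
  have tendsto_log : Tendsto (fun ε : ℝ => Real.log (1 / ε)) (𝓝[>] 0) atTop := by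
    simp only [one_div]
    exact Real.tendsto_log_atTop.comp tendsto_inv_nhdsGT_zero
  refine limsup_le_of_le (by isBoundedDefault) ?_
  filter_upwards [eventually_mem_nhdsWithin, eventually_log_one_div_pos,
    tendsto_scale.eventually eventually_log_one_div_pos,
    tendsto_scale.eventually (eventually_lt_of_limsup_lt ha),
    tendsto_log.eventually_ge_atTop (a * Real.log c / (b - a))] with ε hε hlog hlog' hfa hlarge
  have log_scale : Real.log (1 / (ε / c)) = Real.log c + Real.log (1 / ε) := by
    rw [one_div_div, div_eq_mul_one_div, Real.log_mul hc.ne' (one_div_ne_zero (ne_of_gt hε))]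
  rw [EReal.div_le_iff_le_mul (by exact_mod_cast hlog) (EReal.coe_ne_top _)]
  calc f (ε / c) ≤ Real.log (1 / (ε / c)) * a :=
        (EReal.div_le_iff_le_mul (by exact_mod_cast hlog') (EReal.coe_ne_top _)).1 hfa.le
    _ ≤ Real.log (1 / ε) * b := by
        rw [← EReal.coe_mul, ← EReal.coe_mul, EReal.coe_le_coe_iff, log_scale]
        linarith [(div_le_iff₀ (sub_pos.2 hab)).1 hlarge]

end LogarithmicScale

section Theorems

variable [MetricSpace X] [CompactSpace X] [Nonempty X] [MeasurableSpace X] [BorelSpace X]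

theorem upper_mdim_eq_limsup_shapira_general (T : X → X) (hT : Continuous T)
    (δ : ℝ) (hδ : δ ∈ Ioc 0 1) :
    mdimUpper T = limsup (fun ε : ℝ =>
      (⨆ μ ∈ ergodicMeasures T, ⨅ U ∈ {U : Finset (Set X) |
          IsFiniteOpenCover U ∧ ∀ V ∈ U, Metric.diam V ≤ ε}, shapiraEnt T μ U δ)
        / ((Real.log (1 / ε) : ℝ) : EReal)) (𝓝[>] (0 : ℝ)) := by
  refine le_antisymm (limsup_le_limsup ?_) ((limsup_le_limsup ?_).trans
    (limsup_comp_div_const_div_log_le (sepEnt T univ) zero_lt_four))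
  · filter_upwards [eventually_mem_nhdsWithin, eventually_log_one_div_pos] with ε hε hlog
    exact EReal.div_le_div_right_of_nonneg (by exact_mod_cast hlog.le)
      (sepEnt_le_shapiraEntAtScale hT hδ hε)
  · filter_upwards [eventually_mem_nhdsWithin, eventually_log_one_div_pos] with ε hε hlog
    exact EReal.div_le_div_right_of_nonneg (by exact_mod_cast hlog.le)
      (shapiraEntAtScale_le_sepEnt hT hδ hε)

/-- Variational principle for the upper metric mean dimension in terms of Shapira's
entropy of finite open covers of small diameter (Theorem 3.2, first part). -/
theorem upper_mdim_eq_limsup_shapira (T : X → X) (hT : IsHomeomorph T)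
    (δ : ℝ) (hδ : δ ∈ Set.Ioo (0:ℝ) 1) :
    mdimUpper T = limsup (fun ε : ℝ =>
      (⨆ μ ∈ ergodicMeasures T, ⨅ U ∈ {U : Finset (Set X) |
          IsFiniteOpenCover U ∧ ∀ V ∈ U, Metric.diam V ≤ ε}, shapiraEnt T μ U δ)
        / ((Real.log (1 / ε) : ℝ) : EReal)) (𝓝[>] (0:ℝ)) :=
  upper_mdim_eq_limsup_shapira_general T hT.continuous δ (Ioo_subset_Ioc_self hδ)

end Theorems
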